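/- arXiv:2512.16894 — 15 statements merged into one kernel-verified Lean document; each statement's English description precedes it below -/
import Mathlib

section
/- Let Ξ be a nonzero Borel measure on 𝓔 with Ξ({y ∈ 𝓔 : y₁ = 0}) = 0, let α > 0, and suppose that (Ξ; α) is G-growing for some family G = (G_x)_{x>0}. Then for every γ > 0 such that ∫_𝓔 y₁^γ Ξ(dy) < ∞ one has α < γ; equivalently, α ≤ inf{γ > 0 : ∫_𝓔 y₁^γ Ξ(dy) < ∞}. -/
open MeasureTheory Set Filter

/-- The space `𝓔` of sequences `y = (y₀, y₁, …)` of reals with `y₀ > 0`,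
`y₁ ≥ y₂ ≥ ⋯ ≥ 0` and `y_i → 0`. -/
def growE : Set (ℕ → ℝ) :=
  {y | 0 < y 0 ∧ (∀ i, 1 ≤ i → y (i + 1) ≤ y i) ∧ (∀ i, 1 ≤ i → 0 ≤ y i) ∧
    Tendsto y atTop (nhds 0)}

/-- The pair `(Ξ; α)` is `G`-growing: there is a Borel set `E₀` of full `Ξ`-measure such that
`G` is a multiplicative one-parameter family of maps of `𝓔` which quasi-preserves `Ξ`
(with index `α`), is coordinate-wise monotone on `E₀`, and satisfies the regularity
conditions (joint continuity on `(0,∞) × E₀` and the integrated Lipschitz estimate on the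
first coordinate). -/
def IsGGrowing (Ξ : Measure growE) (α : ℝ) (G : ℝ → growE → growE) : Prop :=
  ∃ E₀ : Set growE, MeasurableSet E₀ ∧ Ξ E₀ᶜ = 0 ∧
    G 1 = id ∧
    (∀ x > (0:ℝ), ∀ x' > (0:ℝ), G x ∘ G x' = G (x * x')) ∧
    (∀ x > (0:ℝ), Measurable (G x)) ∧
    (∀ x > (0:ℝ), Measure.map (G x) Ξ = ENNReal.ofReal (x ^ (-α)) • Ξ) ∧
    (∀ y ∈ E₀, ∀ i : ℕ, MonotoneOn (fun x : ℝ => x * (G x y).val i) (Ioi 0)) ∧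
    (∀ x > (0:ℝ), MapsTo (G x) E₀ E₀) ∧
    ContinuousOn (fun p : ℝ × growE => G p.1 p.2) ((Ioi (0:ℝ)) ×ˢ E₀) ∧
    (∀ K : Set ℝ, IsCompact K → K ⊆ Ioi 0 → ∃ C > (0:ℝ), ∀ x ∈ K, ∀ x' ∈ K,
      (∫⁻ y : growE, ENNReal.ofReal
          ((x * ((G x y).val 0 - 1) - x' * ((G x' y).val 0 - 1)) ^ 2) ∂Ξ)
        ≤ ENNReal.ofReal (C * (x - x') ^ 2))

/-- **Upper bound on the self-similarity parameter.**  If `Ξ` is a nonzero measure on `𝓔`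
giving no mass to `{y : y₁ = 0}`, `α > 0` and `(Ξ; α)` is `G`-growing, then for every
`γ > 0` with `∫ y₁^γ dΞ < ∞` one has `α < γ`. -/
theorem growing_upper_bound_on_alpha
    (Ξ : Measure growE) (hΞ : Ξ ≠ 0)
    (h1 : Ξ {y : growE | y.val 1 = 0} = 0)
    (α : ℝ) (hα : 0 < α) (G : ℝ → growE → growE)
    (hG : IsGGrowing Ξ α G) :
    ∀ γ > (0:ℝ),
      (∫⁻ y : growE, ENNReal.ofReal ((y.val 1) ^ γ) ∂Ξ) < ⊤ → α < γ := by
  intro γ hγ hI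
  by_contra hcon
  have hle : γ ≤ α := not_lt.mp hcon
  obtain ⟨E₀, hE₀, hE₀c, hG1, -, hGm, hGq, hmono, -, -, -⟩ := hG
  have hm1 : Measurable (fun y : growE => y.val 1) :=
    (measurable_pi_apply 1).comp measurable_subtype_coe
  have hms : ∀ s : ℝ, MeasurableSet {y : growE | s ≤ y.val 1} := fun s =>
    measurableSet_le measurable_const hm1
  -- scaling inequality for the tails
  have key : ∀ t : ℝ, ∀ x : ℝ, 1 ≤ x →
      Ξ {y : growE | t ≤ y.val 1} ≤
        ENNReal.ofReal (x ^ (-α)) * Ξ {y : growE | t / x ≤ y.val 1} := by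
    intro t x hx
    have hx0 : 0 < x := by linarith
    have e : Measure.map (G x) Ξ {y : growE | t / x ≤ y.val 1}
        = ENNReal.ofReal (x ^ (-α)) * Ξ {y : growE | t / x ≤ y.val 1} := by
      rw [hGq x hx0, Measure.smul_apply, smul_eq_mul]
    rw [← e, Measure.map_apply (hGm x hx0) (hms _)]
    refine measure_mono_ae ?_
    have hae : ∀ᵐ y ∂Ξ, y ∈ E₀ := by
      rw [ae_iff]; exact hE₀c
    filter_upwards [hae] with y hy ht
    have h := hmono y hy 1 (mem_Ioi.mpr one_pos) (mem_Ioi.mpr hx0) hx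
    simp only [hG1, id, one_mul] at h
    change t ≤ y.val 1 at ht
    change t / x ≤ (G x y).val 1
    rw [div_le_iff₀ hx0]
    linarith
  -- all the tails vanish
  have tail : ∀ t : ℝ, 0 < t → Ξ {y : growE | t ≤ y.val 1} = 0 := by
    intro t ht
    have hs : ∀ n : ℕ, 0 < t / ((n : ℝ) + 1) := fun n => by positivity
    have hlim0 : Tendsto (fun n : ℕ => ENNReal.ofReal ((t / ((n : ℝ) + 1)) ^ γ)) atTop
        (nhds 0) := by
      have a : Tendsto (fun n : ℕ => t / ((n : ℝ) + 1)) atTop (nhds 0) :=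
        tendsto_const_nhds.div_atTop
          (tendsto_atTop_add_const_right _ _ tendsto_natCast_atTop_atTop)
      have b := ENNReal.tendsto_ofReal (a.rpow_const (p := γ) (Or.inr hγ.le))
      simpa [Real.zero_rpow hγ.ne'] using b
    have hlim := tendsto_lintegral_of_dominated_convergence (μ := Ξ)
      (F := fun n : ℕ => {y : growE | t / ((n : ℝ) + 1) ≤ y.val 1}.indicator
        (fun _ => ENNReal.ofReal ((t / ((n : ℝ) + 1)) ^ γ)))
      (f := fun _ => 0)
      (fun y : growE => ENNReal.ofReal ((y.val 1) ^ γ))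
      (fun n => measurable_const.indicator (hms _))
      (fun n => Eventually.of_forall (fun y => by
        change ({y : growE | t / ((n : ℝ) + 1) ≤ y.val 1}.indicator
          (fun _ => ENNReal.ofReal ((t / ((n : ℝ) + 1)) ^ γ))) y ≤ ENNReal.ofReal ((y.val 1) ^ γ)
        refine indicator_apply_le' (fun hy => ?_) (fun _ => by exact zero_le)
        exact ENNReal.ofReal_le_ofReal (Real.rpow_le_rpow (hs n).le hy hγ.le)))
      hI.ne
      (Eventually.of_forall (fun y =>
        tendsto_of_tendsto_of_tendsto_of_le_of_le tendsto_const_nhds hlim0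
          (fun n => zero_le)
          (fun n => indicator_le_self _ _ y)))
    simp only [lintegral_indicator_const (hms _), lintegral_zero] at hlim
    have hb : ∀ n : ℕ, ENNReal.ofReal (t ^ γ) * Ξ {y : growE | t ≤ y.val 1} ≤
        ENNReal.ofReal ((t / ((n : ℝ) + 1)) ^ γ) *
          Ξ {y : growE | t / ((n : ℝ) + 1) ≤ y.val 1} := by
      intro n
      have hx : (1 : ℝ) ≤ (n : ℝ) + 1 := by
        have := Nat.cast_nonneg (α := ℝ) n
        linarith
      have hx0 : (0 : ℝ) < (n : ℝ) + 1 := by linarith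
      calc ENNReal.ofReal (t ^ γ) * Ξ {y : growE | t ≤ y.val 1}
          ≤ ENNReal.ofReal (t ^ γ) * (ENNReal.ofReal (((n : ℝ) + 1) ^ (-α)) *
            Ξ {y : growE | t / ((n : ℝ) + 1) ≤ y.val 1}) := by
              gcongr
              exact key t _ hx
        _ ≤ _ := by
              rw [← mul_assoc, ← ENNReal.ofReal_mul (by positivity)]
              gcongr
              rw [Real.div_rpow ht.le hx0.le, div_eq_mul_inv, ← Real.rpow_neg hx0.le]
              gcongr
    have hz := le_of_tendsto_of_tendsto' tendsto_const_nhds hlim hb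
    have hz' := le_antisymm hz zero_le
    rcases mul_eq_zero.mp hz' with h | h
    · have := ENNReal.ofReal_pos.mpr (Real.rpow_pos_of_pos ht γ)
      exact absurd h this.ne'
    · exact h
  apply hΞ
  rw [← Measure.measure_univ_eq_zero]
  refine measure_mono_null (t := {y : growE | y.val 1 = 0} ∪
    ⋃ n : ℕ, {y : growE | 1 / ((n : ℝ) + 1) ≤ y.val 1}) ?_ ?_
  · intro y _
    have h0 : 0 ≤ y.val 1 := y.property.2.2.1 1 le_rfl
    rcases h0.eq_or_lt with h | h
    · exact Or.inl h.symm
    · obtain ⟨n, hn⟩ := exists_nat_one_div_lt h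
      exact Or.inr (mem_iUnion.mpr ⟨n, hn.le⟩)
  · rw [measure_union_null_iff]
    exact ⟨h1, measure_iUnion_null (fun n => tail _ (by positivity))⟩
end

section
/- Let c > 0 and let f : [0,1) → [0,1) be a continuous bijection whose pushforward measure satisfies f_♯ν = c·ν. Then f(s) = I⁻¹(I(s)/c) for every s ∈ [0,1). In particular, for every α > 0 and t ∈ ℝ there is exactly one continuous bijection f_t of [0,1) onto itself with (f_t)_♯ν = e^{αt}·ν, namely f_t(s) = I⁻¹(e^{−αt}·I(s)). -/
open MeasureTheory Set Filter

theorem qp_map_Iic (ν : Measure ℝ) (hae : ∀ᵐ x ∂ν, x ∈ Ico (0:ℝ) 1) (f : ℝ → ℝ)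
    (hf : Measurable f) (hmono : StrictMonoOn f (Ico 0 1)) (s : ℝ) (hs : s ∈ Ico (0:ℝ) 1) :
    Measure.map f ν (Iic (f s)) = ν (Iic s) := by
  rw [Measure.map_apply hf measurableSet_Iic]
  apply measure_congr
  filter_upwards [hae] with x hx
  exact propext (hmono.le_iff_le hx hs)

theorem qp_ext (μ ν : Measure ℝ) (hμ : ∀ᵐ x ∂μ, x ∈ Iio (1:ℝ)) (hν : ∀ᵐ x ∂ν, x ∈ Iio (1:ℝ))
    (hfin : ∀ a < (1:ℝ), μ (Iic a) < ⊤) (h : ∀ a < (1:ℝ), μ (Iic a) = ν (Iic a)) : μ = ν := by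
  have hU : Iio (1:ℝ) = ⋃ n : ℕ, Iic (1 - 1 / ((n:ℝ) + 1)) := by
    ext x
    simp only [mem_Iio, mem_iUnion, mem_Iic]
    constructor
    · intro hx
      obtain ⟨n, hn⟩ := exists_nat_one_div_lt (sub_pos.2 hx)
      exact ⟨n, by linarith⟩
    · rintro ⟨n, hn⟩
      have : (0:ℝ) < 1 / ((n:ℝ) + 1) := by positivity
      linarith
  rw [← Measure.restrict_eq_self_of_ae_mem hμ, ← Measure.restrict_eq_self_of_ae_mem hν, hU,
    Measure.restrict_iUnion_congr]
  intro n
  have hn : (0:ℝ) < 1 / ((n:ℝ) + 1) := by positivity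
  have : IsFiniteMeasure (μ.restrict (Iic (1 - 1 / ((n:ℝ) + 1)))) :=
    ⟨by rw [Measure.restrict_apply_univ]; exact hfin _ (by linarith)⟩
  apply Measure.ext_of_Iic
  intro a
  rw [Measure.restrict_apply measurableSet_Iic, Measure.restrict_apply measurableSet_Iic,
    Iic_inter_Iic]
  exact h _ (lt_of_le_of_lt inf_le_right (by linarith))

/-- **Quasi-preservation fixes the growing family (binary conservative case).**
Let `lam` be a positive continuous density on `(0,1)` with `I(s) := ∫₀^s lam` finite for
`s < 1` and `I(s) → ∞` as `s → 1⁻`, let `J` be the inverse bijection of `I : [0,1) → [0,∞)`,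
and let `ν` be the measure with density `lam` on `(0,1)`.  If `c > 0` and `f` is a
continuous bijection of `[0,1)` with `f_♯ν = c·ν`, then `f(s) = I⁻¹(I(s)/c)` on `[0,1)`.
In particular, for every `α > 0` and `t ∈ ℝ` there is exactly one continuous bijection
`f_t` of `[0,1)` with `(f_t)_♯ν = e^{αt}·ν`, namely `f_t(s) = I⁻¹(e^{−αt}·I(s))`. -/
theorem quasi_preservation_fixes_growing_family
    (lam : ℝ → ℝ)
    (hcont : ContinuousOn lam (Ioo 0 1))
    (hpos : ∀ s ∈ Ioo (0:ℝ) 1, 0 < lam s)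
    (hint : ∀ s ∈ Ico (0:ℝ) 1, IntegrableOn lam (Ioo 0 s))
    (I : ℝ → ℝ) (hIdef : ∀ s, I s = ∫ u in Ioo (0:ℝ) s, lam u)
    (htop : Tendsto I (nhdsWithin 1 (Iio 1)) atTop)
    (J : ℝ → ℝ)
    (hJI : ∀ s ∈ Ico (0:ℝ) 1, J (I s) = s)
    (hIJ : ∀ t : ℝ, 0 ≤ t → I (J t) = t ∧ J t ∈ Ico (0:ℝ) 1)
    (ν : Measure ℝ)
    (hν : ν = (volume.restrict (Ioo 0 1)).withDensity fun s => ENNReal.ofReal (lam s)) :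
    (∀ c > (0:ℝ), ∀ f : ℝ → ℝ, Measurable f → ContinuousOn f (Ico 0 1) →
      BijOn f (Ico 0 1) (Ico 0 1) →
      Measure.map f ν = ENNReal.ofReal c • ν →
      ∀ s ∈ Ico (0:ℝ) 1, f s = J (I s / c)) ∧
    (∀ α > (0:ℝ), ∀ t : ℝ,
      (∃ f : ℝ → ℝ, Measurable f ∧ ContinuousOn f (Ico 0 1) ∧
        BijOn f (Ico 0 1) (Ico 0 1) ∧
        Measure.map f ν = ENNReal.ofReal (Real.exp (α * t)) • ν ∧
        ∀ s ∈ Ico (0:ℝ) 1, f s = J (Real.exp (-(α * t)) * I s)) ∧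
      (∀ g : ℝ → ℝ, Measurable g → ContinuousOn g (Ico 0 1) →
        BijOn g (Ico 0 1) (Ico 0 1) →
        Measure.map g ν = ENNReal.ofReal (Real.exp (α * t)) • ν →
        ∀ s ∈ Ico (0:ℝ) 1, g s = J (Real.exp (-(α * t)) * I s))) := by
  have hνIic : ∀ s < (1:ℝ), ν (Iic s) = ENNReal.ofReal (I s) := by
    intro s hs
    rw [hν, withDensity_apply _ measurableSet_Iic, Measure.restrict_restrict measurableSet_Iic,
      hIdef]
    have hset : (∫⁻ a in Iic s ∩ Ioo 0 1, ENNReal.ofReal (lam a))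
        = ∫⁻ a in Ioo 0 s, ENNReal.ofReal (lam a) := by
      have h1 : Iic s ∩ Ioo (0:ℝ) 1 = Ioc 0 s := by
        ext x
        simp only [mem_inter_iff, mem_Iic, mem_Ioo, mem_Ioc]
        constructor
        · rintro ⟨a, b, c⟩; exact ⟨b, a⟩
        · rintro ⟨a, b⟩; exact ⟨b, a, by linarith⟩
      rw [h1, restrict_Ioo_eq_restrict_Ioc]
    rw [hset]
    rcases le_or_gt s 0 with h0 | h0
    · simp [Ioo_eq_empty_of_le h0]
    · rw [ofReal_integral_eq_lintegral_ofReal (hint s ⟨h0.le, hs⟩)]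
      filter_upwards [ae_restrict_mem measurableSet_Ioo] with x hx
      exact (hpos x ⟨hx.1, hx.2.trans hs⟩).le
  have hae : ∀ᵐ x ∂ν, x ∈ Ico (0:ℝ) 1 := by
    rw [hν]
    apply (withDensity_absolutelyContinuous _ _).ae_le
    filter_upwards [ae_restrict_mem measurableSet_Ioo] with x hx
    exact ⟨hx.1.le, hx.2⟩
  have hI0 : ∀ s ≤ (0:ℝ), I s = 0 := by
    intro s hs
    rw [hIdef, Ioo_eq_empty_of_le hs]; simp
  have hInn : ∀ s < (1:ℝ), 0 ≤ I s := by
    intro s hs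
    rw [hIdef]
    exact setIntegral_nonneg measurableSet_Ioo
      fun x hx => (hpos x ⟨hx.1, hx.2.trans hs⟩).le
  have hImono : StrictMonoOn I (Ico 0 1) := by
    have hinj : InjOn I (Ico 0 1) := fun a ha b hb hab => by
      rw [← hJI a ha, ← hJI b hb, hab]
    refine MonotoneOn.strictMonoOn_of_injOn ?_ hinj
    intro a ha b hb hab
    have := measure_mono (μ := ν) (Iic_subset_Iic.2 hab)
    rw [hνIic a ha.2, hνIic b hb.2] at this
    exact (ENNReal.ofReal_le_ofReal_iff (hInn b hb.2)).1 this
  have main : ∀ c > (0:ℝ), ∀ f : ℝ → ℝ, Measurable f → ContinuousOn f (Ico 0 1) →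
      BijOn f (Ico 0 1) (Ico 0 1) →
      Measure.map f ν = ENNReal.ofReal c • ν →
      ∀ s ∈ Ico (0:ℝ) 1, f s = J (I s / c) := by
    intro c hc f hf hfc hfb hmap s hs
    have hmono : StrictMonoOn f (Ico 0 1) := by
      have h0 : (0:ℝ) ∈ Ico (0:ℝ) 1 := by simp
      have hf0 := hfb.mapsTo h0
      obtain ⟨x, hx, hxe⟩ := hfb.surjOn
        (show (f 0 + 1) / 2 ∈ Ico (0:ℝ) 1 from ⟨by linarith [hf0.1], by linarith [hf0.2]⟩)
      intro a ha b hb hab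
      have hm0 : 0 ≤ max b x := le_max_of_le_left hb.1
      have hsub : Icc 0 (max b x) ⊆ Ico (0:ℝ) 1 :=
        fun y hy => ⟨hy.1, lt_of_le_of_lt hy.2 (max_lt hb.2 hx.2)⟩
      rcases (hfc.mono hsub).strictMonoOn_of_injOn_Icc' hm0 (hfb.injOn.mono hsub) with h | h
      · exact h ⟨ha.1, hab.le.trans (le_max_left _ _)⟩ ⟨hb.1, le_max_left _ _⟩ hab
      · exfalso
        have := h.antitoneOn ⟨le_rfl, hm0⟩ ⟨hx.1, le_max_right _ _⟩ hx.1
        linarith [hf0.2]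
    have hfs := hfb.mapsTo hs
    have h1 := qp_map_Iic ν hae f hf hmono s hs
    rw [hmap, Measure.smul_apply, hνIic _ hfs.2, hνIic _ hs.2, smul_eq_mul,
      ← ENNReal.ofReal_mul hc.le,
      ENNReal.ofReal_eq_ofReal_iff (mul_nonneg hc.le (hInn _ hfs.2)) (hInn _ hs.2)] at h1
    rw [← h1, mul_div_cancel_left₀ _ hc.ne', hJI _ hfs]
  refine ⟨main, ?_⟩
  intro α hα t
  have hc : 0 < Real.exp (α * t) := Real.exp_pos _
  have hk : 0 < Real.exp (-(α * t)) := Real.exp_pos _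
  have hck : Real.exp (α * t) * Real.exp (-(α * t)) = 1 := by
    rw [← Real.exp_add]; simp
  have hdiv : ∀ x, x / Real.exp (α * t) = Real.exp (-(α * t)) * x := by
    intro x; rw [Real.exp_neg]; field_simp
  constructor
  swap
  · intro g hg hgc hgb hgm s hs
    rw [← hdiv]
    exact main _ hc g hg hgc hgb hgm s hs
  generalize Real.exp (α * t) = c at *
  generalize Real.exp (-(α * t)) = k at *
  set h : ℝ → ℝ := fun s => J (k * I s) with hh
  have hknn : ∀ s < (1:ℝ), 0 ≤ k * I s := fun s hs => mul_nonneg hk.le (hInn s hs)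
  have hmaps : MapsTo h (Ico 0 1) (Ico 0 1) := fun s hs => (hIJ _ (hknn s hs.2)).2
  have hIh : ∀ s < (1:ℝ), I (h s) = k * I s := fun s hs => (hIJ _ (hknn s hs)).1
  have hmono : StrictMonoOn h (Ico 0 1) := by
    intro a ha b hb hab
    rw [← hImono.lt_iff_lt (hmaps ha) (hmaps hb), hIh a ha.2, hIh b hb.2]
    exact mul_lt_mul_of_pos_left (hImono ha hb hab) hk
  have hsurj : SurjOn h (Ico 0 1) (Ico 0 1) := by
    intro y hy
    have hy' : 0 ≤ c * I y := mul_nonneg hc.le (hInn y hy.2)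
    refine ⟨J (c * I y), (hIJ _ hy').2, ?_⟩
    simp only [hh]
    rw [(hIJ _ hy').1, ← mul_assoc, mul_comm k c, hck, one_mul, hJI y hy]
  have hcontn : ContinuousOn h (Ico 0 1) := by
    have hm : Monotone (hmaps.restrict h (Ico 0 1) (Ico 0 1)) := by
      intro a b hab
      exact hmono.monotoneOn a.2 b.2 hab
    have hs : Function.Surjective (hmaps.restrict h (Ico 0 1) (Ico 0 1)) := by
      rintro ⟨y, hy⟩
      obtain ⟨x, hx, hxy⟩ := hsurj hy
      exact ⟨⟨x, hx⟩, Subtype.ext hxy⟩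
    rw [continuousOn_iff_continuous_domRestrict]
    exact continuous_subtype_val.comp (hm.continuous_of_surjective hs)
  classical
  set f : ℝ → ℝ := (Ico (0:ℝ) 1).piecewise h (fun _ => 0) with hfdef
  have heq : EqOn f h (Ico 0 1) := piecewise_eqOn _ _ _
  have hfm : Measurable f :=
    hcontn.measurable_piecewise continuousOn_const measurableSet_Ico
  have hfmono : StrictMonoOn f (Ico 0 1) := hmono.congr heq.symm
  have hfb : BijOn f (Ico 0 1) (Ico 0 1) :=
    ⟨hmaps.congr heq.symm, hfmono.injOn, hsurj.congr heq.symm⟩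
  have hall : ∀ a < (1:ℝ), Measure.map f ν (Iic a) = (ENNReal.ofReal c • ν) (Iic a) := by
    intro a ha
    rcases lt_or_ge a 0 with h0 | h0
    · rw [Measure.smul_apply, hνIic a ha, hI0 a h0.le, Measure.map_apply hfm measurableSet_Iic]
      simp only [ENNReal.ofReal_zero, smul_zero]
      rw [measure_eq_zero_iff_ae_notMem]
      filter_upwards [hae] with x hx hx'
      have h1 := (hfb.mapsTo hx).1
      have h2 : f x ≤ a := hx'
      linarith
    · obtain ⟨s, hs, rfl⟩ := hfb.surjOn ⟨h0, ha⟩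
      rw [qp_map_Iic ν hae f hfm hfmono s hs, Measure.smul_apply, hνIic _ hs.2, hνIic _ ha,
        smul_eq_mul, ← ENNReal.ofReal_mul hc.le, heq hs, hIh s hs.2, ← mul_assoc, hck, one_mul]
  refine ⟨f, hfm, hcontn.congr heq, hfb, ?_, fun s hs => heq hs⟩
  refine qp_ext _ _ ?_ ?_ ?_ hall
  · refine (ae_map_iff hfm.aemeasurable measurableSet_Iio).2 ?_
    filter_upwards [hae] with x hx
    exact (hfb.mapsTo hx).2
  · apply Measure.ae_smul_measure
    filter_upwards [hae] with x hx
    exact hx.2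
  · intro a ha
    rw [hall a ha, Measure.smul_apply, hνIic a ha, smul_eq_mul]
    exact ENNReal.mul_lt_top ENNReal.ofReal_lt_top ENNReal.ofReal_lt_top
end

section
/- Let α > 0 and for t ≥ 0 and s ∈ [0,1) define f_t(s) := I⁻¹(e^{−αt}·I(s)). Then the following are equivalent: (i) for every s ∈ [0,1), both maps t ↦ e^{−t}·f_t(s) and t ↦ e^{−t}·(1 − f_t(s)) are nonincreasing on [0, ∞); (ii) α·I(s) ≤ (1 − s)·λ(s) for every s ∈ (0,1). (Condition (ii) says that the generator v(s) = −α·I(s)/λ(s) satisfies v(s) ≥ s − 1 for all s.) -/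
open MeasureTheory Set Filter

/-- **Monotonicity via the generator (binary conservative case).**
Let `lam` be a positive continuous density on `(0,1)` with `I(s) := ∫₀^s lam` finite for
`s < 1` and `I(s) → ∞` as `s → 1⁻`, and let `J` be the inverse bijection of
`I : [0,1) → [0,∞)`.  For `α > 0` set `f_t(s) := I⁻¹(e^{−αt}·I(s))`.  Then the maps
`t ↦ e^{−t}·f_t(s)` and `t ↦ e^{−t}·(1 − f_t(s))` are nonincreasing on `[0,∞)` for every
`s ∈ [0,1)` if and only if `α·I(s) ≤ (1 − s)·lam(s)` for every `s ∈ (0,1)`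
(i.e. the generator `v = −α·I/lam` satisfies `v(s) ≥ s − 1`). -/
theorem monotonicity_iff_generator_bound
    (lam : ℝ → ℝ)
    (hcont : ContinuousOn lam (Ioo 0 1))
    (hpos : ∀ s ∈ Ioo (0:ℝ) 1, 0 < lam s)
    (hint : ∀ s ∈ Ico (0:ℝ) 1, IntegrableOn lam (Ioo 0 s))
    (I : ℝ → ℝ) (hIdef : ∀ s, I s = ∫ u in Ioo (0:ℝ) s, lam u)
    (htop : Tendsto I (nhdsWithin 1 (Iio 1)) atTop)
    (J : ℝ → ℝ)
    (hJI : ∀ s ∈ Ico (0:ℝ) 1, J (I s) = s)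
    (hIJ : ∀ t : ℝ, 0 ≤ t → I (J t) = t ∧ J t ∈ Ico (0:ℝ) 1)
    (α : ℝ) (hα : 0 < α) :
    ((∀ s ∈ Ico (0:ℝ) 1,
        AntitoneOn (fun t : ℝ => Real.exp (-t) * J (Real.exp (-(α * t)) * I s)) (Ici 0) ∧
        AntitoneOn (fun t : ℝ => Real.exp (-t) * (1 - J (Real.exp (-(α * t)) * I s))) (Ici 0))
      ↔ (∀ s ∈ Ioo (0:ℝ) 1, α * I s ≤ (1 - s) * lam s)) := by
  have hI0 : I 0 = 0 := by rw [hIdef]; simp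
  have hJ0 : J 0 = 0 := by
    have := hJI 0 ⟨le_rfl, one_pos⟩
    rwa [hI0] at this
  have hmono : ∀ a ∈ Ico (0:ℝ) 1, ∀ b ∈ Ico (0:ℝ) 1, a ≤ b → I a ≤ I b := by
    intro a ha b hb hab
    rw [hIdef, hIdef]
    apply setIntegral_mono_set (hint b hb)
    · refine (ae_restrict_iff' measurableSet_Ioo).2 (Eventually.of_forall fun x hx => ?_)
      exact (hpos x ⟨hx.1, hx.2.trans hb.2⟩).le
    · exact (Ioo_subset_Ioo_right hab).eventuallyLE
  have hstrict : ∀ a ∈ Ico (0:ℝ) 1, ∀ b ∈ Ico (0:ℝ) 1, a < b → I a < I b := by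
    intro a ha b hb hab
    refine lt_of_le_of_ne (hmono a ha b hb hab.le) fun h => ?_
    have := hJI a ha
    rw [h, hJI b hb] at this
    exact hab.ne' this
  have hIpos : ∀ s ∈ Ioo (0:ℝ) 1, 0 < I s := by
    intro s hs
    have := hstrict 0 ⟨le_rfl, one_pos⟩ s ⟨hs.1.le, hs.2⟩ hs.1
    rwa [hI0] at this
  have hJmono : ∀ x, 0 ≤ x → ∀ y, 0 ≤ y → x ≤ y → J x ≤ J y := by
    intro x hx y hy hxy
    by_contra! h
    have := hstrict _ (hIJ y hy).2 _ (hIJ x hx).2 h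
    rw [(hIJ y hy).1, (hIJ x hx).1] at this
    exact absurd hxy this.not_ge
  have hJpos : ∀ y, 0 < y → J y ∈ Ioo (0:ℝ) 1 := by
    intro y hy
    obtain ⟨h1, h2⟩ := hIJ y hy.le
    refine ⟨lt_of_le_of_ne h2.1 fun h => ?_, h2.2⟩
    rw [← h, hI0] at h1
    exact hy.ne h1
  have hId : ∀ s ∈ Ioo (0:ℝ) 1, HasDerivAt I (lam s) s := by
    intro s hs
    have hii : IntervalIntegrable lam volume 0 s := by
      rw [intervalIntegrable_iff_integrableOn_Ioo_of_le hs.1.le]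
      exact hint s ⟨hs.1.le, hs.2⟩
    have h := intervalIntegral.integral_hasDerivAt_right hii
      (hcont.stronglyMeasurableAtFilter isOpen_Ioo s hs) (hcont.continuousAt (isOpen_Ioo.mem_nhds hs))
    refine h.congr_of_eventuallyEq ?_
    filter_upwards [isOpen_Ioo.mem_nhds hs] with x hx
    rw [hIdef, intervalIntegral.integral_of_le hx.1.le, integral_Ioc_eq_integral_Ioo]
  have hJc : ∀ y, 0 < y → ContinuousAt J y := by
    intro y hy
    refine continuousAt_of_monotoneOn_of_image_mem_nhds (s := Ioi 0) ?_ (isOpen_Ioi.mem_nhds hy) ?_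
    · intro a ha b hb hab
      exact hJmono a (le_of_lt ha) b (le_of_lt hb) hab
    · refine mem_of_superset (isOpen_Ioo.mem_nhds (hJpos y hy)) ?_
      intro x hx
      exact ⟨I x, hIpos x hx, hJI x ⟨hx.1.le, hx.2⟩⟩
  have hJd : ∀ y, 0 < y → HasDerivAt J (lam (J y))⁻¹ y := by
    intro y hy
    refine HasDerivAt.of_local_left_inverse (hJc y hy) (hId _ (hJpos y hy)) (hpos _ (hJpos y hy)).ne' ?_
    filter_upwards [isOpen_Ioi.mem_nhds hy] with x hx
    exact (hIJ x (le_of_lt hx)).1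
  have hder : ∀ s ∈ Ioo (0:ℝ) 1, ∀ t : ℝ,
      HasDerivAt (fun t : ℝ => Real.exp (-t) * (1 - J (Real.exp (-(α * t)) * I s)))
        (Real.exp (-t) * (α * (Real.exp (-(α * t)) * I s) * (lam (J (Real.exp (-(α * t)) * I s)))⁻¹
          - (1 - J (Real.exp (-(α * t)) * I s)))) t := by
    intro s hs t
    have hy : 0 < Real.exp (-(α * t)) * I s := mul_pos (Real.exp_pos _) (hIpos s hs)
    have h1 : HasDerivAt (fun t : ℝ => Real.exp (-t)) (Real.exp (-t) * (-1)) t :=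
      (hasDerivAt_id t).neg.exp
    have h2 : HasDerivAt (fun t : ℝ => Real.exp (-(α * t)) * I s)
        (Real.exp (-(α * t)) * (-(α * 1)) * I s) t :=
      (((hasDerivAt_id t).const_mul α).neg.exp).mul_const _
    have h3 := HasDerivAt.comp t (hJd _ hy) h2
    have h4 := h1.mul (h3.const_sub 1)
    refine HasDerivAt.congr_deriv h4 ?_
    simp only [Function.comp_apply]
    ring
  have hexp : ∀ t, 0 ≤ I t → ∀ u, 0 ≤ Real.exp (-(α * u)) * I t := fun t ht u =>
    mul_nonneg (Real.exp_pos _).le ht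
  have hInn : ∀ s ∈ Ico (0:ℝ) 1, 0 ≤ I s := by
    intro s hs
    have := hmono 0 ⟨le_rfl, one_pos⟩ s hs hs.1
    rwa [hI0] at this
  constructor
  · intro h s hs
    have ha := (h s ⟨hs.1.le, hs.2⟩).2
    have hd := hder s hs 0
    have h1 := ha.derivWithin_nonpos (x := 0)
    rw [hd.hasDerivWithinAt.derivWithin (uniqueDiffOn_Ici (0:ℝ) 0 self_mem_Ici)] at h1
    simp only [neg_zero, mul_zero, Real.exp_zero, one_mul, hJI s ⟨hs.1.le, hs.2⟩] at h1
    have hl := hpos s hs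
    rw [sub_nonpos, ← div_eq_mul_inv, div_le_iff₀ hl] at h1
    exact h1
  · intro h s hs
    constructor
    · intro a ha b hb hab
      have hI := hInn s hs
      refine mul_le_mul (Real.exp_le_exp.2 (neg_le_neg hab)) ?_ (hIJ _ (hexp s hI b)).2.1 (Real.exp_pos _).le
      refine hJmono _ (hexp s hI b) _ (hexp s hI a) ?_
      gcongr
    · rcases hs.1.eq_or_lt with h0 | h0
      · subst h0
        intro a ha b hb hab
        simp only [hI0, mul_zero, hJ0, sub_zero, mul_one]
        exact Real.exp_le_exp.2 (neg_le_neg hab)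
      · have hs' : s ∈ Ioo (0:ℝ) 1 := ⟨h0, hs.2⟩
        have : Antitone (fun t : ℝ => Real.exp (-t) * (1 - J (Real.exp (-(α * t)) * I s))) := by
          refine antitone_of_deriv_nonpos (fun t => (hder s hs' t).differentiableAt) fun t => ?_
          rw [(hder s hs' t).deriv]
          have hy : 0 < Real.exp (-(α * t)) * I s := mul_pos (Real.exp_pos _) (hIpos s hs')
          have h1 := h _ (hJpos _ hy)
          rw [(hIJ _ hy.le).1] at h1
          refine mul_nonpos_of_nonneg_of_nonpos (Real.exp_pos _).le ?_
          rw [sub_nonpos, ← div_eq_mul_inv, div_le_iff₀ (hpos _ (hJpos _ hy))]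
          exact h1
        exact this.antitoneOn _
end

section
/- Assume in addition that ∫₀¹ (1 − s)²·λ(s) ds < ∞. Let α > 0 and for x > 0 and s ∈ [0,1) define f^{(x)}(s) := I⁻¹(x^α·I(s)). Then the following are equivalent: (i) for every compact set K ⊂ (0, ∞) there exists a constant C_K > 0 such that for all x, x' ∈ K, ∫₀¹ (x·(f^{(x)}(s) − 1) − x'·(f^{(x')}(s) − 1))²·λ(s) ds ≤ C_K·(x − x')²; (ii) ∫₀¹ (I(s)/λ(s))²·λ(s) ds < ∞, i.e. the generator v(s) = −α·I(s)/λ(s) belongs to L²(ν). -/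
open MeasureTheory Set Filter

lemma aux_cs (k : ℝ → ℝ) (a b : ℝ) (hab : a ≤ b) (hk : ContinuousOn k (Icc a b)) :
    (∫ y in a..b, k y) ^ 2 ≤ (b - a) * ∫ y in a..b, k y ^ 2 := by
  rcases hab.eq_or_lt with h | h
  · subst h; simp
  have hk' : ContinuousOn k (uIcc a b) := by rwa [uIcc_of_le hab]
  have i1 : IntervalIntegrable k volume a b := hk'.intervalIntegrable
  have i2 : IntervalIntegrable (fun y => k y ^ 2) volume a b := (hk'.pow 2).intervalIntegrable
  set A := ∫ y in a..b, k y with hA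
  set m := A / (b - a) with hm
  have h0 : 0 ≤ ∫ y in a..b, (k y - m) ^ 2 :=
    intervalIntegral.integral_nonneg hab (fun _ _ => sq_nonneg _)
  have h1 : ∫ y in a..b, (k y - m) ^ 2 = (∫ y in a..b, k y ^ 2) - 2 * m * A + (b - a) * m ^ 2 := by
    have : ∀ y, (k y - m) ^ 2 = (k y ^ 2 - (2 * m) * k y) + m ^ 2 := fun y => by ring
    simp_rw [this]
    rw [intervalIntegral.integral_add (i2.sub (i1.const_mul _)) intervalIntegrable_const,
      intervalIntegral.integral_sub i2 (i1.const_mul _), intervalIntegral.integral_const_mul,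
      intervalIntegral.integral_const]
    simp [hA]
  have hba : 0 < b - a := sub_pos.2 h
  have h2 : m * (b - a) = A := by rw [hm]; field_simp
  rw [h1] at h0
  have := mul_nonneg hba.le h0
  have e : (b - a) * ((∫ y in a..b, k y ^ 2) - 2 * m * A + (b - a) * m ^ 2) =
    (b - a) * (∫ y in a..b, k y ^ 2) - A ^ 2 := by
    rw [← h2]; ring
  linarith

/-- **Integrated Lipschitz condition via the generator (binary conservative case).**
Let `lam` be a positive continuous density on `(0,1)` with `I(s) := ∫₀^s lam` finite for
`s < 1` and `I(s) → ∞` as `s → 1⁻`, let `J` be the inverse of `I : [0,1) → [0,∞)`, and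
assume moreover that `∫₀¹ (1 − s)²·lam(s) ds < ∞`.  For `α > 0` and `x > 0` set
`f^{(x)}(s) := I⁻¹(x^α·I(s))`.  Then the compact-uniform integrated Lipschitz estimate
holds for the family `(f^{(x)})` if and only if `∫₀¹ (I(s)/lam(s))²·lam(s) ds < ∞`,
i.e. the generator `v = −α·I/lam` is in `L²(ν)`. -/
theorem integrated_lipschitz_iff_generator_L2
    (lam : ℝ → ℝ)
    (hcont : ContinuousOn lam (Ioo 0 1))
    (hpos : ∀ s ∈ Ioo (0:ℝ) 1, 0 < lam s)
    (hint : ∀ s ∈ Ico (0:ℝ) 1, IntegrableOn lam (Ioo 0 s))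
    (I : ℝ → ℝ) (hIdef : ∀ s, I s = ∫ u in Ioo (0:ℝ) s, lam u)
    (htop : Tendsto I (nhdsWithin 1 (Iio 1)) atTop)
    (J : ℝ → ℝ)
    (hJI : ∀ s ∈ Ico (0:ℝ) 1, J (I s) = s)
    (hIJ : ∀ t : ℝ, 0 ≤ t → I (J t) = t ∧ J t ∈ Ico (0:ℝ) 1)
    (hmom : (∫⁻ s in Ioo (0:ℝ) 1, ENNReal.ofReal ((1 - s) ^ 2 * lam s)) < ⊤)
    (α : ℝ) (hα : 0 < α) :
    ((∀ K : Set ℝ, IsCompact K → K ⊆ Ioi 0 → ∃ C > (0:ℝ), ∀ x ∈ K, ∀ x' ∈ K,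
        (∫⁻ s in Ioo (0:ℝ) 1, ENNReal.ofReal
            ((x * (J (x ^ α * I s) - 1) - x' * (J (x' ^ α * I s) - 1)) ^ 2 * lam s))
          ≤ ENNReal.ofReal (C * (x - x') ^ 2))
      ↔ (∫⁻ s in Ioo (0:ℝ) 1, ENNReal.ofReal ((I s / lam s) ^ 2 * lam s)) < ⊤) := by
  have Inn : ∀ s, s < 1 → 0 ≤ I s := fun s hs => by
    rw [hIdef]
    refine setIntegral_nonneg measurableSet_Ioo (fun u hu => (hpos u ⟨hu.1, hu.2.trans hs⟩).le)
  have I0 : I 0 = 0 := by rw [hIdef]; simp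
  have Imono : ∀ s ∈ Ico (0:ℝ) 1, ∀ r, r ≤ s → I r ≤ I s := fun s hs r hr => by
    rw [hIdef, hIdef]
    refine setIntegral_mono_set (hint s hs) ?_ (HasSubset.Subset.eventuallyLE (Ioo_subset_Ioo_right hr))
    refine (ae_restrict_mem measurableSet_Ioo).mono fun u hu => (hpos u ⟨hu.1, hu.2.trans hs.2⟩).le
  have Ipos : ∀ s ∈ Ioo (0:ℝ) 1, 0 < I s := fun s hs => by
    refine lt_of_le_of_ne (Inn s hs.2) fun h => ?_
    have h1 := hJI s ⟨hs.1.le, hs.2⟩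
    have h2 := hJI 0 ⟨le_rfl, one_pos⟩
    rw [← h] at h1
    rw [I0] at h2
    linarith [hs.1]
  have Jmem : ∀ t, 0 < t → J t ∈ Ioo (0:ℝ) 1 := fun t ht => by
    obtain ⟨h1, h2⟩ := hIJ t ht.le
    refine ⟨lt_of_le_of_ne h2.1 fun h => ?_, h2.2⟩
    rw [← h, I0] at h1
    linarith
  have Jmono : MonotoneOn J (Ioi 0) := fun a ha b hb hab => by
    by_contra! h
    have := Imono (J a) (hIJ a (le_of_lt ha)).2 (J b) h.le
    rw [(hIJ a (le_of_lt ha)).1, (hIJ b (le_of_lt hb)).1] at this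
    have : a = b := le_antisymm hab this
    subst this
    exact lt_irrefl _ h
  have Jimg : J '' Ioi 0 = Ioo 0 1 := by
    ext s
    constructor
    · rintro ⟨t, ht, rfl⟩; exact Jmem t ht
    · intro hs; exact ⟨I s, Ipos s hs, hJI s ⟨hs.1.le, hs.2⟩⟩
  have Iimg : ∀ c : ℝ, 0 < c → (fun s => c * I s) '' Ioo 0 1 = Ioi 0 := fun c hc => by
    ext t
    constructor
    · rintro ⟨s, hs, rfl⟩; exact mul_pos hc (Ipos s hs)
    · intro ht
      have : 0 < t / c := div_pos ht hc
      refine ⟨J (t / c), Jmem _ this, ?_⟩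
      simp only
      rw [(hIJ _ this.le).1]; field_simp
  have Ideriv : ∀ s ∈ Ioo (0:ℝ) 1, HasDerivAt I (lam s) s := fun s hs => by
    have h1 : HasDerivAt (fun u => ∫ x in (0:ℝ)..u, lam x) (lam s) s := by
      refine intervalIntegral.integral_hasDerivAt_right ?_ ?_ ?_
      · rw [intervalIntegrable_iff_integrableOn_Ioo_of_le hs.1.le]
        exact hint s ⟨hs.1.le, hs.2⟩
      · exact hcont.stronglyMeasurableAtFilter isOpen_Ioo s hs
      · exact hcont.continuousAt (isOpen_Ioo.mem_nhds hs)
    refine h1.congr_of_eventuallyEq ?_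
    filter_upwards [isOpen_Ioo.mem_nhds hs] with u hu
    rw [hIdef, intervalIntegral.integral_of_le hu.1.le, integral_Ioc_eq_integral_Ioo]
  have Jcont : ∀ t, 0 < t → ContinuousAt J t := fun t ht => by
    refine continuousAt_of_monotoneOn_of_image_mem_nhds Jmono (isOpen_Ioi.mem_nhds ht) ?_
    rw [Jimg]; exact isOpen_Ioo.mem_nhds (Jmem t ht)
  have Jderiv : ∀ t, 0 < t → HasDerivAt J (lam (J t))⁻¹ t := fun t ht => by
    refine HasDerivAt.of_local_left_inverse (Jcont t ht) (Ideriv _ (Jmem t ht))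
      (hpos _ (Jmem t ht)).ne' ?_
    filter_upwards [isOpen_Ioi.mem_nhds ht] with u hu using (hIJ u (le_of_lt hu)).1
  obtain ⟨k, hk⟩ : ∃ k : ℝ → ℝ, ∀ t, k t = J t - 1 + α * t / lam (J t) := ⟨_, fun _ => rfl⟩
  have JcontOn : ContinuousOn J (Ioi 0) := fun t ht => (Jcont t ht).continuousWithinAt
  have IcontOn : ContinuousOn I (Ioo 0 1) := fun s hs => (Ideriv s hs).continuousAt.continuousWithinAt
  have kcont : ContinuousOn k (Ioi 0) := by
    have : ContinuousOn (fun t => J t - 1 + α * t / lam (J t)) (Ioi 0) := by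
      refine (JcontOn.sub continuousOn_const).add (ContinuousOn.div (by fun_prop) ?_ ?_)
      · exact hcont.comp JcontOn fun t ht => Jmem t ht
      · exact fun t ht => (hpos _ (Jmem t ht)).ne'
    exact this.congr fun t _ => hk t
  have φderiv : ∀ t, 0 < t → ∀ y, 0 < y →
      HasDerivAt (fun y => y * (J (y ^ α * t) - 1)) (k (y ^ α * t)) y := fun t ht y hy => by
    have hp : 0 < y ^ α * t := mul_pos (Real.rpow_pos_of_pos hy _) ht
    have h1 : HasDerivAt (fun y : ℝ => y ^ α * t) (α * y ^ (α - 1) * t) y :=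
      (Real.hasDerivAt_rpow_const (Or.inl hy.ne')).mul_const t
    have h2 := (hasDerivAt_id y).mul ((((Jderiv _ hp).comp y h1)).sub_const 1)
    refine h2.congr_deriv ?_
    rw [hk]
    have : y ^ α = y ^ (α - 1) * y := by
      rw [← Real.rpow_add_one hy.ne']; ring_nf
    simp only [id, Function.comp]
    rw [div_eq_mul_inv]
    generalize (lam (J (y ^ α * t)))⁻¹ = q
    generalize J (y ^ α * t) = j
    rw [this]; ring
  have kI : ∀ s ∈ Ioo (0:ℝ) 1, k (I s) = s - 1 + α * (I s / lam s) := fun s hs => by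
    rw [hk, hJI s ⟨hs.1.le, hs.2⟩]; ring
  have hlamm : AEMeasurable lam (volume.restrict (Ioo 0 1)) := hcont.aemeasurable measurableSet_Ioo
  have hIm : AEMeasurable I (volume.restrict (Ioo 0 1)) := IcontOn.aemeasurable measurableSet_Ioo
  -- key equivalence
  have key : (∫⁻ s in Ioo (0:ℝ) 1, ENNReal.ofReal (k (I s) ^ 2 * lam s)) < ⊤ ↔
      (∫⁻ s in Ioo (0:ℝ) 1, ENNReal.ofReal ((I s / lam s) ^ 2 * lam s)) < ⊤ := by
    have gen : ∀ f g h : ℝ → ℝ, ∀ c : ℝ, 0 ≤ c →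
        AEMeasurable (fun s => ENNReal.ofReal (g s ^ 2 * lam s)) (volume.restrict (Ioo 0 1)) →
        (∀ s ∈ Ioo (0:ℝ) 1, f s ^ 2 ≤ c * (g s ^ 2 + h s ^ 2)) →
        (∫⁻ s in Ioo (0:ℝ) 1, ENNReal.ofReal (g s ^ 2 * lam s)) < ⊤ →
        (∫⁻ s in Ioo (0:ℝ) 1, ENNReal.ofReal (h s ^ 2 * lam s)) < ⊤ →
        (∫⁻ s in Ioo (0:ℝ) 1, ENNReal.ofReal (f s ^ 2 * lam s)) < ⊤ := by
      intro f g h c hc hm hle hg hh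
      calc (∫⁻ s in Ioo (0:ℝ) 1, ENNReal.ofReal (f s ^ 2 * lam s))
          ≤ ∫⁻ s in Ioo (0:ℝ) 1, ENNReal.ofReal c * (ENNReal.ofReal (g s ^ 2 * lam s) +
              ENNReal.ofReal (h s ^ 2 * lam s)) := by
            refine setLIntegral_mono' measurableSet_Ioo fun s hs => ?_
            have hl := (hpos s hs).le
            rw [← ENNReal.ofReal_add (by positivity) (by positivity), ← ENNReal.ofReal_mul hc]
            refine ENNReal.ofReal_le_ofReal ?_
            calc _ ≤ (c * (g s ^ 2 + h s ^ 2)) * lam s := mul_le_mul_of_nonneg_right (hle s hs) hl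
              _ = _ := by ring
        _ = ENNReal.ofReal c * ((∫⁻ s in Ioo (0:ℝ) 1, ENNReal.ofReal (g s ^ 2 * lam s)) +
              ∫⁻ s in Ioo (0:ℝ) 1, ENNReal.ofReal (h s ^ 2 * lam s)) := by
            rw [lintegral_const_mul' _ _ ENNReal.ofReal_ne_top, lintegral_add_left' hm]
        _ < ⊤ := ENNReal.mul_lt_top ENNReal.ofReal_lt_top (ENNReal.add_lt_top.2 ⟨hg, hh⟩)
    have hm1 : AEMeasurable (fun s => ENNReal.ofReal ((1 - s) ^ 2 * lam s))
        (volume.restrict (Ioo 0 1)) := by fun_prop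
    constructor
    · intro h
      refine gen _ (fun s => 1 - s) (fun s => k (I s)) (2 / α ^ 2) (by positivity) hm1 ?_ hmom h
      intro s hs
      rw [kI s hs]
      generalize I s / lam s = w
      rw [div_mul_eq_mul_div, le_div_iff₀ (by positivity)]
      nlinarith [sq_nonneg ((1 - s) - (s - 1 + α * w))]
    · intro h
      refine gen _ (fun s => 1 - s) (fun s => I s / lam s) (2 * (1 + α ^ 2)) (by positivity) hm1 ?_ hmom h
      intro s hs
      rw [kI s hs]
      generalize I s / lam s = w
      nlinarith [sq_nonneg ((1 - s) + α * w), sq_nonneg (α * (1 - s)), sq_nonneg w]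
  rw [← key]
  constructor
  · intro H
    obtain ⟨C, hC, hH⟩ := H (Icc 1 2) isCompact_Icc (fun x hx => lt_of_lt_of_le one_pos hx.1)
    let u : ℕ → ℝ := fun n => 1 + 1 / ((n:ℝ) + 1)
    have hu1 : ∀ n, 0 < u n - 1 := fun n => by simp only [u]; ring_nf; positivity
    have hu2 : ∀ n, u n ≤ 2 := fun n => by
      have : 1 / ((n:ℝ) + 1) ≤ 1 := by
        rw [div_le_one (by positivity)]; linarith [(Nat.cast_nonneg n : (0:ℝ) ≤ n)]
      simp only [u]; linarith
    have hut : Tendsto u atTop (nhds 1) := by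
      have := (tendsto_one_div_add_atTop_nhds_zero_nat (𝕜 := ℝ)).const_add 1
      simpa [u] using this
    let D : ℕ → ℝ → ℝ := fun n s =>
      (u n * (J (u n ^ α * I s) - 1) - 1 * (J ((1:ℝ) ^ α * I s) - 1)) / (u n - 1)
    have hDlim : ∀ s ∈ Ioo (0:ℝ) 1, Tendsto (fun n => ENNReal.ofReal (D n s ^ 2 * lam s)) atTop
        (nhds (ENNReal.ofReal (k (I s) ^ 2 * lam s))) := fun s hs => by
      have h1 := φderiv (I s) (Ipos s hs) 1 one_pos
      rw [Real.one_rpow, one_mul, hasDerivAt_iff_tendsto_slope] at h1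
      have h2 : Tendsto u atTop (nhdsWithin 1 {1}ᶜ) :=
        tendsto_nhdsWithin_iff.2 ⟨hut, Eventually.of_forall fun n => by
          have := hu1 n
          simp only [mem_compl_iff, mem_singleton_iff]; intro h; linarith⟩
      have h3 : Tendsto (fun n => D n s) atTop (nhds (k (I s))) := by
        refine (h1.comp h2).congr fun n => ?_
        simp only [Function.comp, slope_def_field, D]
      exact (ENNReal.continuous_ofReal.tendsto _).comp ((h3.pow 2).mul_const _)
    have hDm : ∀ n, AEMeasurable (fun s => ENNReal.ofReal (D n s ^ 2 * lam s))
        (volume.restrict (Ioo 0 1)) := fun n => by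
      have hJc : ∀ c : ℝ, 0 < c → AEMeasurable (fun s => J (c * I s)) (volume.restrict (Ioo 0 1)) :=
        fun c hc => ContinuousOn.aemeasurable
          (JcontOn.comp (continuousOn_const.mul IcontOn) fun s hs => mul_pos hc (Ipos s hs))
          measurableSet_Ioo
      have a1 := hJc (u n ^ α) (Real.rpow_pos_of_pos (by linarith [hu1 n]) _)
      have a2 := hJc ((1:ℝ) ^ α) (by simp)
      simp only [D]
      exact (((((a1.sub_const 1).const_mul _).sub ((a2.sub_const 1).const_mul _)).div_const
        _).pow_const 2 |>.mul hlamm).ennreal_ofReal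
    calc (∫⁻ s in Ioo (0:ℝ) 1, ENNReal.ofReal (k (I s) ^ 2 * lam s))
        = ∫⁻ s in Ioo (0:ℝ) 1, liminf (fun n => ENNReal.ofReal (D n s ^ 2 * lam s)) atTop :=
          setLIntegral_congr_fun measurableSet_Ioo fun s hs => (hDlim s hs).liminf_eq.symm
      _ ≤ liminf (fun n => ∫⁻ s in Ioo (0:ℝ) 1, ENNReal.ofReal (D n s ^ 2 * lam s)) atTop :=
          lintegral_liminf_le' hDm
      _ ≤ ENNReal.ofReal C := by
          refine liminf_le_of_le (by isBoundedDefault) ?_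
          intro b hb
          obtain ⟨n, hn⟩ := hb.exists
          refine hn.trans ?_
          have h1 := hH (u n) ⟨by linarith [hu1 n], hu2 n⟩ 1 ⟨le_rfl, by norm_num⟩
          have h2 := hu1 n
          calc (∫⁻ s in Ioo (0:ℝ) 1, ENNReal.ofReal (D n s ^ 2 * lam s))
              = ENNReal.ofReal (((u n - 1) ^ 2)⁻¹) * ∫⁻ s in Ioo (0:ℝ) 1, ENNReal.ofReal
                ((u n * (J (u n ^ α * I s) - 1) - 1 * (J ((1:ℝ) ^ α * I s) - 1)) ^ 2 * lam s) := by
                rw [← lintegral_const_mul' _ _ ENNReal.ofReal_ne_top]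
                refine lintegral_congr fun s => ?_
                rw [← ENNReal.ofReal_mul (by positivity)]
                congr 1
                simp only [D, div_pow]
                ring
            _ ≤ ENNReal.ofReal (((u n - 1) ^ 2)⁻¹) * ENNReal.ofReal (C * (u n - 1) ^ 2) :=
                mul_le_mul_right h1 _
            _ = ENNReal.ofReal C := by
                rw [← ENNReal.ofReal_mul (by positivity)]
                congr 1
                field_simp
      _ < ⊤ := ENNReal.ofReal_lt_top
  · intro hM K hK hK0
    set M := ∫⁻ s in Ioo (0:ℝ) 1, ENNReal.ofReal (k (I s) ^ 2 * lam s) with hMdef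
    obtain ⟨a, ha, haK⟩ : ∃ a > (0:ℝ), ∀ x ∈ K, a ≤ x := by
      rcases K.eq_empty_or_nonempty with h | h
      · exact ⟨1, one_pos, by simp [h]⟩
      · obtain ⟨a, haK, ha⟩ := hK.exists_isLeast h
        exact ⟨a, hK0 haK, fun x hx => ha hx⟩
    -- change of variables
    have cv : ∀ c : ℝ, 0 < c → (∫⁻ s in Ioo (0:ℝ) 1, ENNReal.ofReal (k (c * I s) ^ 2 * lam s))
        = ENNReal.ofReal c⁻¹ * ∫⁻ t in Ioi (0:ℝ), ENNReal.ofReal (k t ^ 2) := fun c hc => by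
      rw [← Iimg c hc, lintegral_image_eq_lintegral_abs_deriv_mul measurableSet_Ioo
        (fun s hs => ((Ideriv s hs).const_mul c).hasDerivWithinAt), 
        ← lintegral_const_mul' _ _ ENNReal.ofReal_ne_top]
      · refine setLIntegral_congr_fun measurableSet_Ioo fun s hs => ?_
        have hl := (hpos s hs).le
        rw [← ENNReal.ofReal_mul (by positivity), ← ENNReal.ofReal_mul (by positivity),
          abs_of_nonneg (by positivity)]
        congr 1
        field_simp
      · intro s hs r hr h
        have : I s = I r := mul_left_cancel₀ hc.ne' h
        rw [← hJI s ⟨hs.1.le, hs.2⟩, this, hJI r ⟨hr.1.le, hr.2⟩]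
    have hMeq : M = ∫⁻ t in Ioi (0:ℝ), ENNReal.ofReal (k t ^ 2) := by
      have := cv 1 one_pos
      simpa using this
    have hapos : 0 < a ^ α := Real.rpow_pos_of_pos ha _
    refine ⟨(a ^ α)⁻¹ * M.toReal + 1, by positivity, ?_⟩
    have main : ∀ x' ∈ K, ∀ x ∈ K, x' ≤ x → (∫⁻ s in Ioo (0:ℝ) 1, ENNReal.ofReal
            ((x * (J (x ^ α * I s) - 1) - x' * (J (x' ^ α * I s) - 1)) ^ 2 * lam s))
          ≤ ENNReal.ofReal (((a ^ α)⁻¹ * M.toReal + 1) * (x - x') ^ 2) := by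
      intro x' hx' x hx hxx
      have hx'0 : 0 < x' := hK0 hx'
      have kc : ∀ t, 0 < t → ContinuousOn (fun y : ℝ => k (y ^ α * t)) (Icc x' x) := fun t ht => by
        refine kcont.comp (ContinuousOn.mul ?_ continuousOn_const) ?_
        · exact fun y hy => (Real.continuousAt_rpow_const _ _
            (Or.inl (hx'0.trans_le hy.1).ne')).continuousWithinAt
        · exact fun y hy => mul_pos (Real.rpow_pos_of_pos (hx'0.trans_le hy.1) _) ht
      have pw : ∀ s ∈ Ioo (0:ℝ) 1, ENNReal.ofReal
            ((x * (J (x ^ α * I s) - 1) - x' * (J (x' ^ α * I s) - 1)) ^ 2 * lam s) ≤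
          ENNReal.ofReal (x - x') * ∫⁻ y in Ioc x' x, ENNReal.ofReal (k (y ^ α * I s) ^ 2 * lam s) := by
        intro s hs
        have hl := (hpos s hs).le
        have hc := kc (I s) (Ipos s hs)
        have hc' : ContinuousOn (fun y : ℝ => k (y ^ α * I s)) (uIcc x' x) := by rwa [uIcc_of_le hxx]
        have ftc := intervalIntegral.integral_eq_sub_of_hasDerivAt
          (f := fun y => y * (J (y ^ α * I s) - 1)) (f' := fun y => k (y ^ α * I s))
          (a := x') (b := x)
          (fun y hy => φderiv (I s) (Ipos s hs) y (by
            rw [uIcc_of_le hxx] at hy; exact hx'0.trans_le hy.1)) hc'.intervalIntegrable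
        have cs := aux_cs _ _ _ hxx hc
        rw [ftc] at cs
        have hint2 : IntervalIntegrable (fun y => k (y ^ α * I s) ^ 2 * lam s) volume x' x :=
          ((hc'.pow 2).mul continuousOn_const).intervalIntegrable
        rw [← ofReal_integral_eq_lintegral_ofReal
          ((intervalIntegrable_iff_integrableOn_Ioc_of_le hxx).1 hint2)
          (Eventually.of_forall fun y => by simp only [Pi.zero_apply]; positivity),
          ← ENNReal.ofReal_mul (sub_nonneg.2 hxx), ← intervalIntegral.integral_of_le hxx,
          intervalIntegral.integral_mul_const, ← mul_assoc]
        exact ENNReal.ofReal_le_ofReal (mul_le_mul_of_nonneg_right cs hl)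
      have hjm : AEMeasurable (Function.uncurry fun s y : ℝ =>
          ENNReal.ofReal (k (y ^ α * I s) ^ 2 * lam s))
          ((volume.restrict (Ioo 0 1)).prod (volume.restrict (Ioc x' x))) := by
        rw [Measure.prod_restrict]
        have hcc : ContinuousOn (fun p : ℝ × ℝ => k (p.2 ^ α * I p.1) ^ 2 * lam p.1)
            (Ioo 0 1 ×ˢ Ioc x' x) := by
          refine ContinuousOn.mul (ContinuousOn.pow (kcont.comp (ContinuousOn.mul ?_ ?_) ?_) 2) ?_
          · exact fun p hp => ((Real.continuousAt_rpow_const _ _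
              (Or.inl (hx'0.trans hp.2.1).ne')).comp continuousAt_snd).continuousWithinAt
          · exact IcontOn.comp continuousOn_fst fun p hp => hp.1
          · exact fun p hp => mul_pos (Real.rpow_pos_of_pos (hx'0.trans hp.2.1) _) (Ipos _ hp.1)
          · exact hcont.comp continuousOn_fst fun p hp => hp.1
        exact (hcc.aemeasurable (measurableSet_Ioo.prod measurableSet_Ioc)).ennreal_ofReal
      calc _ ≤ ∫⁻ s in Ioo (0:ℝ) 1, ENNReal.ofReal (x - x') *
              ∫⁻ y in Ioc x' x, ENNReal.ofReal (k (y ^ α * I s) ^ 2 * lam s) :=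
            setLIntegral_mono' measurableSet_Ioo pw
        _ = ENNReal.ofReal (x - x') * ∫⁻ y in Ioc x' x, ∫⁻ s in Ioo (0:ℝ) 1,
              ENNReal.ofReal (k (y ^ α * I s) ^ 2 * lam s) := by
            rw [lintegral_const_mul' _ _ ENNReal.ofReal_ne_top, lintegral_lintegral_swap hjm]
        _ ≤ ENNReal.ofReal (x - x') * ∫⁻ y in Ioc x' x, ENNReal.ofReal ((a ^ α)⁻¹) * M := by
            refine mul_le_mul_right (setLIntegral_mono' measurableSet_Ioc fun y hy => ?_) _
            have hy0 : 0 < y := hx'0.trans hy.1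
            rw [cv _ (Real.rpow_pos_of_pos hy0 _), ← hMeq]
            refine mul_le_mul_left (ENNReal.ofReal_le_ofReal ?_) _
            exact inv_anti₀ hapos (Real.rpow_le_rpow ha.le ((haK x' hx').trans hy.1.le) hα.le)
        _ = ENNReal.ofReal ((a ^ α)⁻¹ * M.toReal * (x - x') ^ 2) := by
            have hd := sub_nonneg.2 hxx
            conv_lhs => rw [← ENNReal.ofReal_toReal hM.ne]
            rw [setLIntegral_const, Real.volume_Ioc, ← ENNReal.ofReal_mul (by positivity),
              ← ENNReal.ofReal_mul (by positivity), ← ENNReal.ofReal_mul (by positivity)]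
            congr 1
            ring
        _ ≤ _ := by
            refine ENNReal.ofReal_le_ofReal ?_
            nlinarith [sq_nonneg (x - x')]
    intro x hx x' hx'
    rcases le_total x' x with h | h
    · exact main x' hx' x hx h
    · have := main x hx x' hx' h
      rw [show (x - x') ^ 2 = (x' - x) ^ 2 by ring]
      refine le_trans (le_of_eq ?_) this
      refine lintegral_congr fun s => ?_
      congr 1
      ring
end

section
/- For each y ∈ [0,1], the maps x ↦ x·m_x(y) and x ↦ x·(1 − m_x(y)) are nondecreasing on (0, ∞). In particular, for every x ∈ (0,1] and y ∈ [0,1], x·m_x(y) ≤ y and x·(1 − m_x(y)) ≤ 1 − y. -/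
open Set

/-- The magic function `m_x(y) = x·y/(x·y + (1 − y))`. -/
noncomputable def magic (x y : ℝ) : ℝ := x * y / (x * y + (1 - y))

/-- **Monotonicity of the magic family.**  For each `y ∈ [0,1]` the maps
`x ↦ x·m_x(y)` and `x ↦ x·(1 − m_x(y))` are nondecreasing on `(0,∞)`; in particular
`x·m_x(y) ≤ y` and `x·(1 − m_x(y)) ≤ 1 − y` for `x ∈ (0,1]` and `y ∈ [0,1]`. -/
theorem magic_monotone :
    (∀ y ∈ Icc (0:ℝ) 1,
      MonotoneOn (fun x => x * magic x y) (Ioi 0) ∧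
      MonotoneOn (fun x => x * (1 - magic x y)) (Ioi 0)) ∧
    (∀ x ∈ Ioc (0:ℝ) 1, ∀ y ∈ Icc (0:ℝ) 1,
      x * magic x y ≤ y ∧ x * (1 - magic x y) ≤ 1 - y) := by
  have hD : ∀ x y : ℝ, 0 < x → 0 ≤ y → y ≤ 1 → 0 < x * y + (1 - y) := by
    intro x y hx h0 h1
    rcases h0.eq_or_lt with h | h
    · subst h; norm_num
    · have := mul_pos hx h
      linarith
  have key : ∀ y ∈ Icc (0:ℝ) 1,
      MonotoneOn (fun x => x * magic x y) (Ioi 0) ∧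
      MonotoneOn (fun x => x * (1 - magic x y)) (Ioi 0) := by
    rintro y ⟨h0, h1⟩
    have h1' : 0 ≤ 1 - y := by linarith
    constructor
    · intro a ha b hb hab
      have ha' : 0 < a := ha
      have hb' : 0 < b := hb
      have hba : 0 ≤ b - a := by linarith
      have e : ∀ x : ℝ, x * magic x y = (x * (x * y)) / (x * y + (1 - y)) := by
        intro x; unfold magic; ring
      simp only [e]
      rw [div_le_div_iff₀ (hD a y ha' h0 h1) (hD b y hb' h0 h1)]
      have : 0 ≤ y * (a * b * y * (b - a) + (1 - y) * ((b - a) * (b + a))) := by positivity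
      nlinarith [this]
    · intro a ha b hb hab
      have ha' : 0 < a := ha
      have hb' : 0 < b := hb
      have hba : 0 ≤ b - a := by linarith
      have e : ∀ x : ℝ, 0 < x →
          x * (1 - magic x y) = (x * (1 - y)) / (x * y + (1 - y)) := by
        intro x hx
        have := (hD x y hx h0 h1).ne'
        unfold magic
        rw [one_sub_div this, ← mul_div_assoc]
        ring
      simp only [e a ha', e b hb']
      rw [div_le_div_iff₀ (hD a y ha' h0 h1) (hD b y hb' h0 h1)]
      have : 0 ≤ (1 - y) ^ 2 * (b - a) := by positivity
      nlinarith [this]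
  refine ⟨key, ?_⟩
  rintro x ⟨hx, hx1⟩ y hy
  have m1 : magic 1 y = y := by unfold magic; simp
  have A := (key y hy).1 (mem_Ioi.2 hx) (mem_Ioi.2 one_pos) hx1
  have B := (key y hy).2 (mem_Ioi.2 hx) (mem_Ioi.2 one_pos) hx1
  simp only [m1, one_mul] at A B
  exact ⟨A, B⟩
end

section
/- For every γ ∈ ℝ, every x > 0 and every measurable f : [0,1) → [0, ∞], one has the identity in [0, ∞]: ∫₀¹ f(m_x(y))·y^{γ−1}·(1 − y)^{−1−γ} dy = x^{−γ} · ∫₀¹ f(y)·y^{γ−1}·(1 − y)^{−1−γ} dy. Equivalently, the pushforward of ν_γ under m_x equals x^{−γ}·ν_γ. -/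
open MeasureTheory Set
open scoped ENNReal

/-- The measure `ν_γ` on `[0,1)` with density `y^{γ−1}·(1 − y)^{−1−γ}`. -/
noncomputable def nuGamma (γ : ℝ) : Measure ℝ :=
  (volume.restrict (Ico 0 1)).withDensity fun y =>
    ENNReal.ofReal (y ^ (γ - 1) * (1 - y) ^ (-1 - γ))

/-- Change of variables on the open interval. -/
theorem magic_lintegral_aux (γ : ℝ) (x : ℝ) (hx : 0 < x) (f : ℝ → ℝ≥0∞) :
    (∫⁻ y in Ico (0:ℝ) 1,
          f (magic x y) * ENNReal.ofReal (y ^ (γ - 1) * (1 - y) ^ (-1 - γ)))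
        = ENNReal.ofReal (x ^ (-γ)) *
          ∫⁻ y in Ico (0:ℝ) 1,
            f y * ENNReal.ofReal (y ^ (γ - 1) * (1 - y) ^ (-1 - γ)) := by
  have hr : (volume : Measure ℝ).restrict (Ico 0 1) = volume.restrict (Ioo 0 1) :=
    Measure.restrict_congr_set Ioo_ae_eq_Ico.symm
  rw [hr]
  have hD : ∀ z : ℝ, 0 < z → ∀ y ∈ Ioo (0:ℝ) 1, 0 < z * y + (1 - y) := by
    intro z hz y hy
    have := mul_pos hz hy.1
    linarith [hy.2]
  have hmem : ∀ z : ℝ, 0 < z → ∀ y ∈ Ioo (0:ℝ) 1, magic z y ∈ Ioo (0:ℝ) 1 := by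
    intro z hz y hy
    have h1 := hD z hz y hy
    refine ⟨div_pos (mul_pos hz hy.1) h1, ?_⟩
    unfold magic
    rw [div_lt_one h1]
    linarith [hy.2]
  have hinv : ∀ z : ℝ, 0 < z → ∀ y ∈ Ioo (0:ℝ) 1, magic z⁻¹ (magic z y) = y := by
    intro z hz y hy
    have h1 := hD z hz y hy
    have h2 : z⁻¹ * magic z y + (1 - magic z y) = 1 / (z * y + (1 - y)) := by
      unfold magic
      field_simp
      ring
    have h3 : magic z⁻¹ (magic z y)
        = z⁻¹ * magic z y / (z⁻¹ * magic z y + (1 - magic z y)) := rfl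
    rw [h3, h2]
    unfold magic
    field_simp
  have himg : magic x '' Ioo (0:ℝ) 1 = Ioo (0:ℝ) 1 := by
    apply Subset.antisymm
    · rintro _ ⟨y, hy, rfl⟩
      exact hmem x hx y hy
    · intro y hy
      refine ⟨magic x⁻¹ y, hmem _ (inv_pos.2 hx) y hy, ?_⟩
      have := hinv x⁻¹ (inv_pos.2 hx) y hy
      rwa [inv_inv] at this
  have hinj : InjOn (magic x) (Ioo (0:ℝ) 1) := by
    intro a ha b hb hab
    rw [← hinv x hx a ha, ← hinv x hx b hb, hab]
  have hder : ∀ y ∈ Ioo (0:ℝ) 1,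
      HasDerivWithinAt (magic x) (x / (x * y + (1 - y)) ^ 2) (Ioo (0:ℝ) 1) y := by
    intro y hy
    have h1 := hD x hx y hy
    have hn : HasDerivAt (fun y : ℝ => x * y) x y := by
      simpa using (hasDerivAt_id y).const_mul x
    have hd : HasDerivAt (fun y : ℝ => x * y + (1 - y)) (x + -1) y :=
      hn.add (by simpa using (hasDerivAt_id y).const_sub 1)
    have h3 : HasDerivAt (magic x) _ y := hn.div hd h1.ne'
    refine (h3.congr_deriv ?_).hasDerivWithinAt
    congr 1
    ring
  have hcv := lintegral_image_eq_lintegral_abs_deriv_mul measurableSet_Ioo hder hinj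
    (fun y => f y * ENNReal.ofReal (y ^ (γ - 1) * (1 - y) ^ (-1 - γ)))
  rw [himg] at hcv
  rw [hcv, ← lintegral_const_mul' _ _ ENNReal.ofReal_ne_top]
  apply setLIntegral_congr_fun measurableSet_Ioo
  intro y hy
  have h1 := hD x hx y hy
  have hy0 := hy.1
  have hy1 : 0 < 1 - y := by linarith [hy.2]
  have key : y ^ (γ - 1) * (1 - y) ^ (-1 - γ) = x ^ (-γ) * (|x / (x * y + (1 - y)) ^ 2| *
      (magic x y ^ (γ - 1) * (1 - magic x y) ^ (-1 - γ))) := by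
    have e1 : 1 - magic x y = (1 - y) / (x * y + (1 - y)) := by
      unfold magic
      field_simp
      ring
    rw [e1]
    unfold magic
    rw [abs_of_pos (by positivity)]
    generalize x * y + (1 - y) = D at h1
    generalize 1 - y = w at hy1
    rw [Real.div_rpow (by positivity) h1.le, Real.div_rpow hy1.le h1.le,
      Real.mul_rpow hx.le hy0.le]
    have a1 : x ^ (-γ) * x * x ^ (γ - 1) = 1 := by
      nth_rewrite 2 [← Real.rpow_one x]
      rw [← Real.rpow_add hx, ← Real.rpow_add hx]
      ring_nf
      simp
    have a2 : D ^ 2 * (D ^ (γ - 1) * D ^ (-1 - γ)) = 1 := by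
      rw [← Real.rpow_natCast, ← Real.rpow_add h1, ← Real.rpow_add h1]
      ring_nf
      simp
    calc y ^ (γ - 1) * w ^ (-1 - γ) = (x ^ (-γ) * x * x ^ (γ - 1)) * (y ^ (γ - 1) * w ^ (-1 - γ))
          / (D ^ 2 * (D ^ (γ - 1) * D ^ (-1 - γ))) := by rw [a1, a2]; simp
      _ = _ := by
        field_simp
  have hm := hmem x hx y hy
  have hk := congrArg ENNReal.ofReal key
  rw [ENNReal.ofReal_mul (Real.rpow_nonneg hx.le (-γ)), ENNReal.ofReal_mul (abs_nonneg _)] at hk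
  simp only
  rw [hk]
  ring

/-- **Quasi-preservation of `ν_γ` by the magic family.**  For every `γ ∈ ℝ`, `x > 0` and
measurable `f : [0,1) → [0,∞]`, `∫₀¹ f(m_x(y))·y^{γ−1}(1−y)^{−1−γ} dy
= x^{−γ}·∫₀¹ f(y)·y^{γ−1}(1−y)^{−1−γ} dy`; equivalently `(m_x)_♯ ν_γ = x^{−γ}·ν_γ`. -/
theorem magic_quasi_preserves_nuGamma (γ : ℝ) (x : ℝ) (hx : 0 < x) :
    (∀ f : ℝ → ℝ≥0∞, Measurable f →
      (∫⁻ y in Ico (0:ℝ) 1,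
          f (magic x y) * ENNReal.ofReal (y ^ (γ - 1) * (1 - y) ^ (-1 - γ)))
        = ENNReal.ofReal (x ^ (-γ)) *
          ∫⁻ y in Ico (0:ℝ) 1,
            f y * ENNReal.ofReal (y ^ (γ - 1) * (1 - y) ^ (-1 - γ))) ∧
    Measure.map (fun y => magic x y) (nuGamma γ) = ENNReal.ofReal (x ^ (-γ)) • nuGamma γ := by
  refine ⟨fun f _ => magic_lintegral_aux γ x hx f, ?_⟩
  have hmm : Measurable (fun y => magic x y) := by
    unfold magic
    fun_prop
  have hdm : Measurable (fun y : ℝ => ENNReal.ofReal (y ^ (γ - 1) * (1 - y) ^ (-1 - γ))) := by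
    fun_prop
  refine Measure.ext_of_lintegral _ fun f hf => ?_
  rw [lintegral_map hf hmm, lintegral_smul_measure]
  unfold nuGamma
  have hc : Measurable (fun y => f (magic x y)) := hf.comp hmm
  rw [lintegral_withDensity_eq_lintegral_mul _ hdm hc,
    lintegral_withDensity_eq_lintegral_mul _ hdm hf]
  have h := magic_lintegral_aux γ x hx f
  simp only [mul_comm (f _)] at h
  exact h
end

section
/- For every γ ∈ (0, 2) and every 0 < a ≤ b there exists a constant C > 0 such that for all x, x' ∈ [a, b]: ∫₀¹ ( x·(m_x(y) − 1) − x'·(m_{x'}(y) − 1) )² · y^{γ−1}·(1 − y)^{−1−γ} dy ≤ C·(x − x')². -/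
open MeasureTheory Set

lemma magic_pointwise (γ : ℝ) (hγ : γ ∈ Ioo (0:ℝ) 2) (a : ℝ) (ha : 0 < a)
    (x x' y : ℝ) (hx : a ≤ x) (hx' : a ≤ x') (hy : y ∈ Ico (0:ℝ) 1) :
    (x * (magic x y - 1) - x' * (magic x' y - 1)) ^ 2 *
            (y ^ (γ - 1) * (1 - y) ^ (-1 - γ))
      ≤ (1 / (min a 1) ^ 4 * (x - x') ^ 2) * y ^ (γ - 1) := by
  obtain ⟨hy0, hy1⟩ := hy
  have hc : 0 < min a 1 := lt_min ha one_pos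
  set c := min a 1 with hcdef
  have hca : c ≤ a := min_le_left _ _
  have hc1 : c ≤ 1 := min_le_right _ _
  have hD : ∀ z, a ≤ z → c ≤ z * y + (1 - y) := by
    intro z hz
    nlinarith [mul_le_mul_of_nonneg_right (hca.trans hz) hy0]
  have h1 := hD x hx
  have h2 := hD x' hx'
  have e : x * (magic x y - 1) - x' * (magic x' y - 1)
      = -((1 - y) ^ 2 * (x - x') / ((x * y + (1 - y)) * (x' * y + (1 - y)))) := by
    have p1 : x * y + (1 - y) ≠ 0 := by linarith
    have p2 : x' * y + (1 - y) ≠ 0 := by linarith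
    unfold magic
    generalize hE : x * y + (1 - y) = E at p1 ⊢
    generalize hF : x' * y + (1 - y) = F at p2 ⊢
    field_simp
    rw [← hE, ← hF]
    ring
  have hr : (1 - y) ^ 4 * (1 - y) ^ (-1 - γ) ≤ 1 := by
    rw [← Real.rpow_natCast, ← Real.rpow_add (by linarith)]
    apply Real.rpow_le_one (by linarith) (by linarith)
    push_cast
    linarith [hγ.2]
  have hyp : 0 ≤ y ^ (γ - 1) := Real.rpow_nonneg hy0 _
  have hyq : 0 ≤ (1 - y) ^ (-1 - γ) := Real.rpow_nonneg (by linarith) _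
  have hDD : c ^ 4 ≤ ((x * y + (1 - y)) * (x' * y + (1 - y))) ^ 2 := by
    have : c * c ≤ (x * y + (1 - y)) * (x' * y + (1 - y)) :=
      mul_le_mul h1 h2 hc.le (hc.le.trans h1)
    calc c ^ 4 = (c * c) ^ 2 := by ring
      _ ≤ _ := by gcongr
  rw [e, neg_sq, div_pow]
  calc ((1 - y) ^ 2 * (x - x')) ^ 2 / ((x * y + (1 - y)) * (x' * y + (1 - y))) ^ 2 *
        (y ^ (γ - 1) * (1 - y) ^ (-1 - γ))
      ≤ ((1 - y) ^ 2 * (x - x')) ^ 2 / c ^ 4 * (y ^ (γ - 1) * (1 - y) ^ (-1 - γ)) := by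
        gcongr
    _ = ((1 - y) ^ 4 * (1 - y) ^ (-1 - γ)) * ((1 / c ^ 4 * (x - x') ^ 2) * y ^ (γ - 1)) := by
        ring
    _ ≤ 1 * ((1 / c ^ 4 * (x - x') ^ 2) * y ^ (γ - 1)) := by gcongr
    _ = _ := one_mul _

/-- **Integrated Lipschitz estimate for the magic family against `ν_γ`.**
For `γ ∈ (0,2)` and `0 < a ≤ b` there is `C > 0` such that for all `x, x' ∈ [a,b]`,
`∫₀¹ (x(m_x(y) − 1) − x'(m_{x'}(y) − 1))²·y^{γ−1}(1−y)^{−1−γ} dy ≤ C·(x − x')²`. -/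
theorem magic_integrated_lipschitz (γ : ℝ) (hγ : γ ∈ Ioo (0:ℝ) 2)
    (a b : ℝ) (ha : 0 < a) (hab : a ≤ b) :
    ∃ C > (0:ℝ), ∀ x ∈ Icc a b, ∀ x' ∈ Icc a b,
      (∫⁻ y in Ico (0:ℝ) 1, ENNReal.ofReal
          ((x * (magic x y - 1) - x' * (magic x' y - 1)) ^ 2 *
            (y ^ (γ - 1) * (1 - y) ^ (-1 - γ))))
        ≤ ENNReal.ofReal (C * (x - x') ^ 2) := by
  set J := ∫⁻ y in Ico (0:ℝ) 1, ENNReal.ofReal (y ^ (γ - 1)) with hJ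
  have hJfin : J ≠ ⊤ := by
    have hi : IntegrableOn (fun y : ℝ => y ^ (γ - 1)) (Ico 0 1) := by
      have := intervalIntegral.intervalIntegrable_rpow' (a := 0) (b := 1) (r := γ - 1)
        (by linarith [hγ.1])
      rwa [intervalIntegrable_iff_integrableOn_Ico_of_le zero_le_one] at this
    exact hi.lintegral_lt_top.ne
  have hc : 0 < min a 1 := lt_min ha one_pos
  refine ⟨1 / (min a 1) ^ 4 * J.toReal + 1, by positivity, ?_⟩
  intro x hx x' hx'
  calc _ ≤ ∫⁻ y in Ico (0:ℝ) 1, ENNReal.ofReal (1 / (min a 1) ^ 4 * (x - x') ^ 2) *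
            ENNReal.ofReal (y ^ (γ - 1)) := by
        refine setLIntegral_mono' measurableSet_Ico fun y hy => ?_
        rw [← ENNReal.ofReal_mul (by positivity)]
        exact ENNReal.ofReal_le_ofReal (magic_pointwise γ hγ a ha x x' y hx.1 hx'.1 hy)
    _ = ENNReal.ofReal (1 / (min a 1) ^ 4 * (x - x') ^ 2) * J :=
        lintegral_const_mul' _ _ ENNReal.ofReal_ne_top
    _ = ENNReal.ofReal (1 / (min a 1) ^ 4 * (x - x') ^ 2 * J.toReal) := by
        rw [ENNReal.ofReal_mul (q := J.toReal) (by positivity), ENNReal.ofReal_toReal hJfin]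
    _ ≤ _ := by
        apply ENNReal.ofReal_le_ofReal
        nlinarith [sq_nonneg (x - x')]
end

section
/- Let γ > 0 and let Θ be a σ-finite Borel measure on the space ℝ≥0^ℕ of nonnegative sequences. Let Ξ be the pushforward of the product measure ν_γ ⊗ Θ under the map (y₀, y) ↦ (y₀, (1 − y₀)·y) (scalar multiplication of the sequence y), a measure on [0,1) × ℝ≥0^ℕ. For x > 0 define G^M_x(y₀, z) := ( m_x(y₀), ((1 − m_x(y₀))/(1 − y₀))·z ) for y₀ ∈ [0,1). Then: (i) for every x > 0, the pushforward of Ξ under G^M_x equals x^{−γ}·Ξ; (ii) for every point (y₀, z) with y₀ ∈ [0,1), the map x ↦ x·G^M_x(y₀, z) is coordinate-wise nondecreasing on (0, ∞); in particular x·G^M_x(y₀, z) ≤ (y₀, z) coordinate-wise for x ∈ (0,1]. -/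
open MeasureTheory Set

lemma magic_aux_den {x y : ℝ} (hx : 0 < x) (hy : y ∈ Ico (0:ℝ) 1) : 0 < x * y + (1 - y) := by
  have := mul_nonneg hx.le hy.1
  linarith [hy.2]

lemma magic_one_sub {x y : ℝ} (hx : 0 < x) (hy : y ∈ Ico (0:ℝ) 1) :
    1 - magic x y = (1 - y) / (x * y + (1 - y)) := by
  have h := (magic_aux_den hx hy).ne'
  unfold magic
  rw [eq_div_iff h, sub_mul, div_mul_cancel₀ _ h]
  ring

lemma magic_mem {x y : ℝ} (hx : 0 < x) (hy : y ∈ Ico (0:ℝ) 1) : magic x y ∈ Ico (0:ℝ) 1 := by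
  have h := magic_aux_den hx hy
  refine ⟨div_nonneg (mul_nonneg hx.le hy.1) h.le, ?_⟩
  have h2 : 0 < 1 - magic x y := by
    rw [magic_one_sub hx hy]
    exact div_pos (by linarith [hy.2]) h
  linarith

lemma magic_inv {x y : ℝ} (hx : 0 < x) (hy : y ∈ Ico (0:ℝ) 1) : magic x⁻¹ (magic x y) = y := by
  have h := magic_aux_den hx hy
  have h1 := magic_one_sub hx hy
  unfold magic at h1 ⊢
  rw [h1]
  have e : x⁻¹ * (x * y / (x * y + (1 - y))) = y / (x * y + (1 - y)) := by
    field_simp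
  rw [e, ← add_div, div_div_div_cancel_right₀ h.ne']
  simp

lemma magic_image {x : ℝ} (hx : 0 < x) : magic x '' Ico (0:ℝ) 1 = Ico (0:ℝ) 1 := by
  ext w
  constructor
  · rintro ⟨y, hy, rfl⟩
    exact magic_mem hx hy
  · intro hw
    refine ⟨magic x⁻¹ w, magic_mem (inv_pos.2 hx) hw, ?_⟩
    have := magic_inv (inv_pos.2 hx) hw
    rwa [inv_inv] at this

lemma magic_deriv {x y : ℝ} (hx : 0 < x) (hy : y ∈ Ico (0:ℝ) 1) :
    HasDerivAt (magic x) (x / (x * y + (1 - y)) ^ 2) y := by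
  have h := magic_aux_den hx hy
  have h1 : HasDerivAt (fun y : ℝ => x * y) (x * 1) y := (hasDerivAt_id y).const_mul x
  have h2 : HasDerivAt (fun y : ℝ => x * y + (1 - y)) (x * 1 + (0 - 1)) y :=
    h1.add ((hasDerivAt_const y (1:ℝ)).sub (hasDerivAt_id y))
  have h3 := h1.div h2 h.ne'
  exact h3.congr_deriv (by congr 1; ring)

lemma magic_measurable (x : ℝ) : Measurable (magic x) := by
  unfold magic
  fun_prop

lemma magic_density {γ x y : ℝ} (hx : 0 < x) (hy : y ∈ Ico (0:ℝ) 1) :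
    x / (x * y + (1 - y)) ^ 2 * (magic x y ^ (γ - 1) * (1 - magic x y) ^ (-1 - γ))
      = x ^ γ * (y ^ (γ - 1) * (1 - y) ^ (-1 - γ)) := by
  have h := magic_aux_den hx hy
  have hy1 : 0 ≤ 1 - y := by linarith [hy.2]
  rw [magic_one_sub hx hy]
  unfold magic
  set D := x * y + (1 - y)
  rw [Real.div_rpow (mul_nonneg hx.le hy.1) h.le, Real.div_rpow hy1 h.le,
    Real.mul_rpow hx.le hy.1]
  have e1 : D ^ (-1 - γ) = (D ^ (γ - 1))⁻¹ * (D ^ 2)⁻¹ := by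
    rw [← Real.rpow_natCast D 2, ← Real.rpow_neg h.le, ← Real.rpow_neg h.le,
      ← Real.rpow_add h]
    congr 1
    push_cast
    ring
  have e2 : x ^ γ = x ^ (γ - 1) * x := by
    rw [Real.rpow_sub_one hx.ne', div_mul_cancel₀ _ hx.ne']
  have h3 : D ^ (γ - 1) ≠ 0 := (Real.rpow_pos_of_pos h _).ne'
  rw [e1, e2]
  generalize (1 - y) ^ (-1 - γ) = a
  generalize y ^ (γ - 1) = b
  generalize x ^ (γ - 1) = c
  generalize D ^ (γ - 1) = d at h3
  field_simp

lemma map_magic_nuGamma (γ : ℝ) {x : ℝ} (hx : 0 < x) :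
    Measure.map (magic x) (nuGamma γ) = ENNReal.ofReal (x ^ (-γ)) • nuGamma γ := by
  ext s hs
  have hms : MeasurableSet (magic x ⁻¹' s) := magic_measurable x hs
  rw [Measure.map_apply (magic_measurable x) hs, Measure.smul_apply, smul_eq_mul]
  unfold nuGamma
  set f : ℝ → ENNReal := fun y => ENNReal.ofReal (y ^ (γ - 1) * (1 - y) ^ (-1 - γ)) with hf
  rw [withDensity_apply _ hs, withDensity_apply _ hms, ← lintegral_indicator hs,
    ← lintegral_indicator hms]
  have key := lintegral_image_eq_lintegral_abs_deriv_mul (measurableSet_Ico (a := (0:ℝ)) (b := 1))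
    (fun y hy => (magic_deriv hx hy).hasDerivWithinAt)
    (fun a ha b hb hab => by
      rw [← magic_inv hx ha, ← magic_inv hx hb]
      exact congrArg _ hab) (s.indicator f)
  rw [magic_image hx] at key
  have h2 : ∫⁻ y in Ico (0:ℝ) 1, ENNReal.ofReal |x / (x * y + (1 - y)) ^ 2| *
      s.indicator f (magic x y) =
      ∫⁻ y in Ico (0:ℝ) 1, ENNReal.ofReal (x ^ γ) * (magic x ⁻¹' s).indicator f y := by
    refine setLIntegral_congr_fun measurableSet_Ico fun y hy => ?_
    have h := magic_aux_den hx hy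
    by_cases hys : magic x y ∈ s
    · have hys' : y ∈ magic x ⁻¹' s := hys
      simp only [indicator_of_mem hys, indicator_of_mem hys', hf]
      rw [abs_of_pos (div_pos hx (pow_pos h 2)), ← ENNReal.ofReal_mul (by positivity),
        ← ENNReal.ofReal_mul (by positivity), magic_density hx hy]
    · have hys' : y ∉ magic x ⁻¹' s := hys
      simp only [indicator_of_notMem hys, indicator_of_notMem hys', mul_zero]
  rw [key, h2, lintegral_const_mul' _ _ ENNReal.ofReal_ne_top, ← mul_assoc,
    ← ENNReal.ofReal_mul (by positivity), ← Real.rpow_add hx]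
  simp

lemma nuGamma_ae (γ : ℝ) : ∀ᵐ y ∂nuGamma γ, y ∈ Ico (0:ℝ) 1 :=
  (withDensity_absolutelyContinuous _ _).ae_le (ae_restrict_mem measurableSet_Ico)

instance nuGamma_sigmaFinite (γ : ℝ) : SigmaFinite (nuGamma γ) := by
  unfold nuGamma
  exact SigmaFinite.withDensity_ofReal _

/-- **Splitting measures of mass form `M_γ` are `G^M`-growing (quasi-preservation and
monotonicity).**  Let `γ > 0`, `Θ` a σ-finite measure on nonnegative sequences, and `Ξ`
the pushforward of `ν_γ ⊗ Θ` under `(y₀, y) ↦ (y₀, (1 − y₀)·y)`.  With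
`G^M_x(y₀, z) = (m_x(y₀), ((1 − m_x(y₀))/(1 − y₀))·z)`:
(i) `(G^M_x)_♯ Ξ = x^{−γ}·Ξ` for every `x > 0`; (ii) `x ↦ x·G^M_x(y₀, z)` is
coordinate-wise nondecreasing on `(0,∞)`, and `x·G^M_x(y₀, z) ≤ (y₀, z)` for `x ∈ (0,1]`. -/
theorem massForm_is_GM_growing (γ : ℝ) (hγ : 0 < γ)
    (Θ : Measure (ℕ → ℝ)) [SigmaFinite Θ]
    (hΘ : Θ {z : ℕ → ℝ | ¬ ∀ i, 0 ≤ z i} = 0)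
    (Ξ : Measure (ℝ × (ℕ → ℝ)))
    (hΞ : Ξ = Measure.map (fun p : ℝ × (ℕ → ℝ) => (p.1, fun i => (1 - p.1) * p.2 i))
      ((nuGamma γ).prod Θ))
    (GM : ℝ → ℝ × (ℕ → ℝ) → ℝ × (ℕ → ℝ))
    (hGM : ∀ x : ℝ, ∀ p : ℝ × (ℕ → ℝ),
      GM x p = (magic x p.1, fun i => ((1 - magic x p.1) / (1 - p.1)) * p.2 i)) :
    (∀ x > (0:ℝ), Measure.map (GM x) Ξ = ENNReal.ofReal (x ^ (-γ)) • Ξ) ∧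
    (∀ y₀ ∈ Ico (0:ℝ) 1, ∀ z : ℕ → ℝ, (∀ i, 0 ≤ z i) →
      (MonotoneOn (fun x : ℝ => x * (GM x (y₀, z)).1) (Ioi 0) ∧
        ∀ i, MonotoneOn (fun x : ℝ => x * (GM x (y₀, z)).2 i) (Ioi 0)) ∧
      (∀ x ∈ Ioc (0:ℝ) 1,
        x * (GM x (y₀, z)).1 ≤ y₀ ∧ ∀ i, x * (GM x (y₀, z)).2 i ≤ z i)) := by
  refine ⟨fun x hx => ?_, fun y₀ hy z hz => ?_⟩
  · have hG : GM x = fun p => (magic x p.1, fun i => ((1 - magic x p.1) / (1 - p.1)) * p.2 i) :=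
      funext (hGM x)
    have hm := magic_measurable x
    have hGm : Measurable (GM x) := by
      rw [hG]
      refine Measurable.prodMk (by fun_prop) (measurable_pi_lambda _ fun i => ?_)
      fun_prop
    set φ : ℝ × (ℕ → ℝ) → ℝ × (ℕ → ℝ) := fun p => (p.1, fun i => (1 - p.1) * p.2 i) with hφ
    have hφm : Measurable φ := by
      refine Measurable.prodMk (by fun_prop) (measurable_pi_lambda _ fun i => ?_)
      fun_prop
    have hprod : Measurable (Prod.map (magic x) (id : (ℕ → ℝ) → (ℕ → ℝ))) :=
      hm.prodMap measurable_id
    have hae : GM x ∘ φ =ᵐ[(nuGamma γ).prod Θ] φ ∘ Prod.map (magic x) id := by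
      have h1 : ∀ᵐ p ∂((nuGamma γ).prod Θ), p.1 ∈ Ico (0:ℝ) 1 :=
        Measure.quasiMeasurePreserving_fst.ae (nuGamma_ae γ)
      filter_upwards [h1] with p hp
      have h2 : 1 - p.1 ≠ 0 := by linarith [hp.2]
      simp only [Function.comp, hG, hφ, Prod.map, id]
      refine Prod.ext rfl (funext fun i => ?_)
      simp only
      rw [← mul_assoc, div_mul_cancel₀ _ h2]
    have hpm : Measure.map (Prod.map (magic x) id) ((nuGamma γ).prod Θ)
        = ENNReal.ofReal (x ^ (-γ)) • (nuGamma γ).prod Θ := by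
      rw [← Measure.map_prod_map _ _ hm measurable_id, map_magic_nuGamma γ hx, Measure.map_id,
        Measure.prod_smul_left]
    rw [hΞ, Measure.map_map hGm hφm, Measure.map_congr hae, ← Measure.map_map hφm hprod, hpm,
      Measure.map_smul]
  · have e1 : ∀ x, 0 < x → x * (GM x (y₀, z)).1 = x * (x * y₀ / (x * y₀ + (1 - y₀))) := by
      intro x hx
      rw [hGM]
      rfl
    have hy1 : 0 < 1 - y₀ := by linarith [hy.2]
    have e2 : ∀ x, 0 < x → ∀ i, x * (GM x (y₀, z)).2 i = x / (x * y₀ + (1 - y₀)) * z i := by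
      intro x hx i
      have h := magic_aux_den hx hy
      rw [hGM]
      simp only [magic_one_sub hx hy]
      rw [div_div_cancel_left' hy1.ne']
      ring
    have m2 : ∀ a, 0 < a → ∀ b, 0 < b → a ≤ b →
        a / (a * y₀ + (1 - y₀)) ≤ b / (b * y₀ + (1 - y₀)) := by
      intro a ha b hb hab
      rw [div_le_div_iff₀ (magic_aux_den ha hy) (magic_aux_den hb hy)]
      nlinarith
    have M1 : MonotoneOn (fun x : ℝ => x * (GM x (y₀, z)).1) (Ioi 0) := by
      intro a ha b hb hab
      have ha' : 0 < a := ha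
      have hb' : 0 < b := hb
      simp only [e1 a ha, e1 b hb]
      rw [mul_div_right_comm, mul_div_right_comm]
      have := m2 a ha b hb hab
      have h0 := (div_pos ha' (magic_aux_den ha hy)).le
      exact mul_le_mul hab (mul_le_mul_of_nonneg_right this hy.1) (mul_nonneg h0 hy.1) hb'.le
    have M2 : ∀ i, MonotoneOn (fun x : ℝ => x * (GM x (y₀, z)).2 i) (Ioi 0) := by
      intro i a ha b hb hab
      simp only [e2 a ha, e2 b hb]
      exact mul_le_mul_of_nonneg_right (m2 a ha b hb hab) (hz i)
    refine ⟨⟨M1, M2⟩, fun x hx => ⟨?_, fun i => ?_⟩⟩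
    · have := M1 (show x ∈ Ioi (0:ℝ) from hx.1) (show (1:ℝ) ∈ Ioi (0:ℝ) from mem_Ioi.2 one_pos) hx.2
      simp only [e1 1 one_pos] at this
      simpa using this
    · have := M2 i (show x ∈ Ioi (0:ℝ) from hx.1) (show (1:ℝ) ∈ Ioi (0:ℝ) from mem_Ioi.2 one_pos) hx.2
      simp only [e2 1 one_pos] at this
      simpa using this
end

section
/- For every x > 0 and every s ∈ [1/2, 1): 𝚏_x(s) ∈ [1/2, 1), 𝚏_x(1/2) = 1/2, and h(𝚏_x(s)) = x·h(s). -/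
open Set

/-- `h(s) = (1 − 2s)²/(s(1 − s))`. -/
noncomputable def hBro (s : ℝ) : ℝ := (1 - 2 * s) ^ 2 / (s * (1 - s))

/-- The locally largest growing family of the Brownian CRT (by mass):
`𝚏_x(s) = (1/2)(1 + √(h(s)/(4x⁻¹ + h(s))))`. -/
noncomputable def fBro (x s : ℝ) : ℝ :=
  (1 / 2) * (1 + Real.sqrt (hBro s / (4 * x⁻¹ + hBro s)))

/-- **Basic properties of the Brownian locally largest growing family.**  For `x > 0` and
`s ∈ [1/2, 1)`: `𝚏_x(s) ∈ [1/2, 1)`, `𝚏_x(1/2) = 1/2`, and `h(𝚏_x(s)) = x·h(s)`. -/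
theorem fBro_basic_properties :
    ∀ x > (0:ℝ), ∀ s ∈ Ico ((1:ℝ)/2) 1,
      fBro x s ∈ Ico ((1:ℝ)/2) 1 ∧ fBro x (1/2) = 1/2 ∧ hBro (fBro x s) = x * hBro s := by
  intro x hx s hs
  obtain ⟨hs1, hs2⟩ := hs
  have hH : 0 ≤ hBro s := by
    unfold hBro
    apply div_nonneg (sq_nonneg _)
    apply mul_nonneg <;> linarith
  have hy : 0 < x⁻¹ := inv_pos.mpr hx
  have hD : 0 < 4 * x⁻¹ + hBro s := by linarith
  have hq0 : 0 ≤ hBro s / (4 * x⁻¹ + hBro s) := div_nonneg hH hD.le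
  have hq1 : hBro s / (4 * x⁻¹ + hBro s) < 1 := by
    rw [div_lt_one hD]; linarith
  refine ⟨?_, ?_, ?_⟩
  · have h0 := Real.sqrt_nonneg (hBro s / (4 * x⁻¹ + hBro s))
    have h1 : Real.sqrt (hBro s / (4 * x⁻¹ + hBro s)) < 1 := by
      rw [Real.sqrt_lt' one_pos]; simpa using hq1
    unfold fBro
    constructor <;> linarith
  · have h0 : hBro (1 / 2) = 0 := by norm_num [hBro]
    unfold fBro
    rw [h0]
    simp
  · have key : ∀ r : ℝ, hBro (1 / 2 * (1 + r)) = 4 * r ^ 2 / (1 - r ^ 2) := by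
      intro r
      unfold hBro
      have e1 : (1 - 2 * (1 / 2 * (1 + r))) ^ 2 = r ^ 2 := by ring
      have e2 : 1 / 2 * (1 + r) * (1 - 1 / 2 * (1 + r)) = (1 - r ^ 2) / 4 := by ring
      rw [e1, e2, div_div_eq_mul_div, mul_comm]
    unfold fBro
    rw [key, Real.sq_sqrt hq0, div_eq_iff (by linarith)]
    have hD' := hD.ne'
    generalize hBro s = H at *
    have e : 1 - H / (4 * x⁻¹ + H) = 4 * x⁻¹ / (4 * x⁻¹ + H) := by
      rw [eq_div_iff hD', sub_mul, div_mul_cancel₀ _ hD']; ring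
    rw [e, ← mul_div_assoc, ← mul_div_assoc]
    congr 1
    have : x * x⁻¹ = 1 := mul_inv_cancel₀ hx.ne'
    linear_combination (-4 * H) * this
end

section
/- For all x, x' > 0 and all s ∈ [1/2, 1): 𝚏₁(s) = s and 𝚏_x(𝚏_{x'}(s)) = 𝚏_{x·x'}(s), i.e. the family (𝚏_x)_{x>0} is a multiplicative one-parameter semigroup of maps of [1/2, 1). -/
open Set

lemma hBro_nonneg' (s : ℝ) (hs : s ∈ Ico ((1:ℝ)/2) 1) : 0 ≤ hBro s := by
  obtain ⟨h1, h2⟩ := hs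
  unfold hBro
  exact div_nonneg (sq_nonneg _) (mul_nonneg (by linarith) (by linarith))

lemma hBro_fBro (x s : ℝ) (hx : 0 < x) (hs : s ∈ Ico ((1:ℝ)/2) 1) :
    hBro (fBro x s) = x * hBro s := by
  have hh := hBro_nonneg' s hs
  unfold fBro
  generalize hBro s = h at hh
  have hd : 0 < 4 * x⁻¹ + h := by positivity
  have hq := Real.sq_sqrt (show 0 ≤ h / (4 * x⁻¹ + h) by positivity)
  generalize Real.sqrt (h / (4 * x⁻¹ + h)) = q at hq
  have e1 : (1 - 2 * (1 / 2 * (1 + q))) ^ 2 = q ^ 2 := by ring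
  have e2 : (1 / 2 * (1 + q)) * (1 - 1 / 2 * (1 + q)) = (1 - q ^ 2) / 4 := by ring
  have e3 : 1 - h / (4 * x⁻¹ + h) = 4 * x⁻¹ / (4 * x⁻¹ + h) := by
    field_simp
    ring
  unfold hBro
  rw [e1, e2, hq, e3]
  field_simp

/-- **The family `(𝚏_x)_{x>0}` is a multiplicative one-parameter semigroup of maps of
`[1/2, 1)`.**  For all `x, x' > 0` and `s ∈ [1/2, 1)`: `𝚏₁(s) = s` and
`𝚏_x(𝚏_{x'}(s)) = 𝚏_{x·x'}(s)`. -/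
theorem fBro_semigroup :
    ∀ x > (0:ℝ), ∀ x' > (0:ℝ), ∀ s ∈ Ico ((1:ℝ)/2) 1,
      fBro 1 s = s ∧ fBro x (fBro x' s) = fBro (x * x') s := by
  intro x hx x' hx' s hs
  constructor
  · obtain ⟨h1, h2⟩ := hs
    have e : hBro s / (4 * (1:ℝ)⁻¹ + hBro s) = (2 * s - 1) ^ 2 := by
      have p1 : 0 < s := by linarith
      have p2 : 0 < 1 - s := by linarith
      have e0 : 4 * (1:ℝ)⁻¹ + hBro s = 1 / (s * (1 - s)) := by
        unfold hBro
        field_simp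
        ring
      rw [e0]
      unfold hBro
      field_simp
      ring
    unfold fBro
    rw [e, Real.sqrt_sq (by linarith)]
    ring
  · have hh := hBro_nonneg' s hs
    have hk := hBro_fBro x' s hx' hs
    rw [fBro, hk, fBro]
    congr 3
    generalize hBro s = h at hh
    have hd : 0 < 4 * x⁻¹ + x' * h := by positivity
    have hd' : 0 < 4 * (x * x')⁻¹ + h := by positivity
    rw [div_eq_div_iff hd.ne' hd'.ne']
    field_simp
end

section
/- For every x > 0 and every measurable φ : [1/2, 1) → [0, ∞], one has the identity in [0, ∞]: ∫_{1/2}^1 φ(𝚏_x(s))·(s(1 − s))^{−3/2} ds = x^{−1/2} · ∫_{1/2}^1 φ(s)·(s(1 − s))^{−3/2} ds. That is, the pushforward of the measure with density (s(1−s))^{−3/2} on (1/2, 1) under 𝚏_x equals x^{−1/2} times that measure (quasi-preservation with self-similarity index α = 1/2). -/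
open MeasureTheory Set
open scoped ENNReal

noncomputable def GBro (s : ℝ) : ℝ := (2 * s - 1) / (2 * Real.sqrt (s * (1 - s)))

noncomputable def gBro (w : ℝ) : ℝ := (1 / 2) * (1 + w / Real.sqrt (1 + w ^ 2))

lemma pos_of_mem {s : ℝ} (hs : s ∈ Ico ((1:ℝ)/2) 1) : 0 < s * (1 - s) := by
  have h1 := hs.1
  have h2 := hs.2
  exact mul_pos (by linarith) (by linarith)

lemma GBro_nonneg {s : ℝ} (hs : s ∈ Ico ((1:ℝ)/2) 1) : 0 ≤ GBro s := by
  have h1 := hs.1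
  unfold GBro
  exact div_nonneg (by linarith) (by positivity)

lemma GBro_sq {s : ℝ} (hs : s ∈ Ico ((1:ℝ)/2) 1) : GBro s ^ 2 = hBro s / 4 := by
  have h := pos_of_mem hs
  unfold GBro hBro
  rw [div_pow, mul_pow, Real.sq_sqrt h.le, div_div]
  congr 1 <;> ring

lemma fBro_eq {x s : ℝ} (hx : 0 < x) (hs : s ∈ Ico ((1:ℝ)/2) 1) :
    fBro x s = gBro (Real.sqrt x * GBro s) := by
  have hG := GBro_nonneg hs
  have hsq : (Real.sqrt x * GBro s) ^ 2 = x * hBro s / 4 := by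
    rw [mul_pow, Real.sq_sqrt hx.le, GBro_sq hs]; ring
  have hW : 0 ≤ Real.sqrt x * GBro s := by positivity
  have hh : 0 ≤ hBro s := by
    have := GBro_sq hs
    nlinarith [sq_nonneg (GBro s)]
  unfold fBro gBro
  congr 2
  rw [← Real.sqrt_sq hW, Real.sqrt_sq hW, hsq]
  rw [show Real.sqrt x * GBro s = Real.sqrt (x * hBro s / 4) by rw [← hsq, Real.sqrt_sq hW]]
  rw [← Real.sqrt_div (by positivity)]
  congr 1
  field_simp

lemma gBro_GBro {s : ℝ} (hs : s ∈ Ico ((1:ℝ)/2) 1) : gBro (GBro s) = s := by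
  have h := fBro_eq one_pos hs
  rw [Real.sqrt_one, one_mul] at h
  rw [← h]
  have hp := pos_of_mem hs
  have h1 := hs.1
  have : hBro s / (4 * (1:ℝ)⁻¹ + hBro s) = (2 * s - 1) ^ 2 := by
    unfold hBro
    have : 4 * (1:ℝ)⁻¹ + (1 - 2 * s) ^ 2 / (s * (1 - s)) = 1 / (s * (1 - s)) := by
      rw [eq_div_iff hp.ne', add_mul, div_mul_cancel₀ _ hp.ne']; ring
    rw [this, div_div_div_cancel_right₀ hp.ne']; ring
  unfold fBro
  rw [this, Real.sqrt_sq (by linarith)]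
  ring

lemma gBro_mem {w : ℝ} (hw : 0 ≤ w) : gBro w ∈ Ico ((1:ℝ)/2) 1 := by
  have hr : 0 < Real.sqrt (1 + w ^ 2) := Real.sqrt_pos.2 (by positivity)
  have h0 : 0 ≤ w / Real.sqrt (1 + w ^ 2) := by positivity
  have h1 : w / Real.sqrt (1 + w ^ 2) < 1 := by
    rw [div_lt_one hr]
    exact Real.lt_sqrt_of_sq_lt (by linarith)
  unfold gBro
  constructor <;> linarith

lemma GBro_gBro {w : ℝ} : GBro (gBro w) = w := by
  have hr : 0 < Real.sqrt (1 + w ^ 2) := Real.sqrt_pos.2 (by positivity)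
  have hr2 : Real.sqrt (1 + w ^ 2) ^ 2 = 1 + w ^ 2 := Real.sq_sqrt (by positivity)
  unfold GBro gBro
  set r := Real.sqrt (1 + w ^ 2)
  have : (1 / 2 * (1 + w / r)) * (1 - 1 / 2 * (1 + w / r)) = (1 / (2 * r)) ^ 2 := by
    field_simp
    nlinarith
  rw [this, Real.sqrt_sq (by positivity)]
  field_simp
  ring

lemma GBro_deriv {s : ℝ} (hs : s ∈ Ico ((1:ℝ)/2) 1) :
    HasDerivAt GBro ((1 / 4) * (s * (1 - s)) ^ (-(3:ℝ)/2)) s := by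
  have hp := pos_of_mem hs
  have hq : HasDerivAt (fun s : ℝ => s * (1 - s)) (1 - 2 * s) s := by
    have := (hasDerivAt_id s).mul ((hasDerivAt_id s).const_sub 1)
    refine this.congr_deriv ?_
    simp only [id]
    ring
  have hr := (hq.sqrt hp.ne').const_mul 2
  have hn : HasDerivAt (fun s : ℝ => 2 * s - 1) 2 s := by
    simpa using ((hasDerivAt_id s).const_mul 2).sub_const 1
  have hsp := Real.sqrt_pos.2 hp
  have hd := hn.div hr (by positivity)
  have hpow : (s * (1 - s)) ^ (-(3:ℝ)/2) = 1 / Real.sqrt (s * (1 - s)) ^ 3 := by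
    rw [Real.sqrt_eq_rpow, ← Real.rpow_natCast, ← Real.rpow_mul hp.le, neg_div,
      Real.rpow_neg hp.le, one_div]
    norm_num
  have hs2 := Real.sq_sqrt hp.le
  refine HasDerivAt.congr_deriv (f := GBro) hd ?_
  rw [hpow]
  set r := Real.sqrt (s * (1 - s))
  field_simp
  nlinarith

lemma key {c : ℝ} (hc : 0 < c) (ψ : ℝ → ℝ≥0∞) :
    ∫⁻ s in Ico ((1:ℝ)/2) 1,
      ψ (c * GBro s) * ENNReal.ofReal ((s * (1 - s)) ^ (-(3:ℝ)/2))
    = ENNReal.ofReal (4 * c⁻¹) * ∫⁻ w in Ici (0:ℝ), ψ w := by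
  have himg : (fun s => c * GBro s) '' Ico ((1:ℝ)/2) 1 = Ici 0 := by
    ext w
    constructor
    · rintro ⟨s, hs, rfl⟩
      exact mul_nonneg hc.le (GBro_nonneg hs)
    · intro hw
      have hw' : 0 ≤ w := hw
      refine ⟨gBro (w / c), gBro_mem (by positivity), ?_⟩
      simp only [GBro_gBro]
      field_simp
  have hinj : InjOn (fun s => c * GBro s) (Ico ((1:ℝ)/2) 1) := by
    intro a ha b hb hab
    have : GBro a = GBro b := mul_left_cancel₀ hc.ne' hab
    rw [← gBro_GBro ha, ← gBro_GBro hb, this]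
  rw [← himg, lintegral_image_eq_lintegral_abs_deriv_mul measurableSet_Ico
    (fun s hs => ((GBro_deriv hs).const_mul c).hasDerivWithinAt) hinj,
    ← lintegral_const_mul' _ _ ENNReal.ofReal_ne_top]
  refine setLIntegral_congr_fun measurableSet_Ico fun s hs => ?_
  have hp := pos_of_mem hs
  have hρ : 0 < (s * (1 - s)) ^ (-(3:ℝ)/2) := Real.rpow_pos_of_pos hp _
  rw [← mul_assoc, ← ENNReal.ofReal_mul (by positivity), abs_of_pos (by positivity), mul_comm]
  congr 2
  field_simp

lemma main_lintegral {x : ℝ} (hx : 0 < x) (φ : ℝ → ℝ≥0∞) :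
    (∫⁻ s in Ico ((1:ℝ)/2) 1,
          φ (fBro x s) * ENNReal.ofReal ((s * (1 - s)) ^ (-(3:ℝ)/2)))
        = ENNReal.ofReal (x ^ (-(1:ℝ)/2)) *
          ∫⁻ s in Ico ((1:ℝ)/2) 1,
            φ s * ENNReal.ofReal ((s * (1 - s)) ^ (-(3:ℝ)/2)) := by
  have h1 := key (Real.sqrt_pos.2 hx) (fun w => φ (gBro w))
  have h2 := key one_pos (fun w => φ (gBro w))
  have e1 : ∀ s ∈ Ico ((1:ℝ)/2) 1,
      φ (fBro x s) * ENNReal.ofReal ((s * (1 - s)) ^ (-(3:ℝ)/2)) =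
      φ (gBro (Real.sqrt x * GBro s)) * ENNReal.ofReal ((s * (1 - s)) ^ (-(3:ℝ)/2)) :=
    fun s hs => by rw [fBro_eq hx hs]
  have e2 : ∀ s ∈ Ico ((1:ℝ)/2) 1,
      φ s * ENNReal.ofReal ((s * (1 - s)) ^ (-(3:ℝ)/2)) =
      φ (gBro (1 * GBro s)) * ENNReal.ofReal ((s * (1 - s)) ^ (-(3:ℝ)/2)) :=
    fun s hs => by rw [one_mul, gBro_GBro hs]
  rw [setLIntegral_congr_fun measurableSet_Ico e1, setLIntegral_congr_fun measurableSet_Ico e2,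
    h1, h2, ← mul_assoc, ← ENNReal.ofReal_mul (by positivity)]
  congr 2
  rw [neg_div, Real.rpow_neg hx.le, Real.sqrt_eq_rpow]
  ring

/-- **Quasi-preservation of the Brownian splitting density by `𝚏` (index `α = 1/2`).**
For every `x > 0` and measurable `φ : [1/2, 1) → [0,∞]`,
`∫_{1/2}^1 φ(𝚏_x(s))·(s(1−s))^{−3/2} ds = x^{−1/2}·∫_{1/2}^1 φ(s)·(s(1−s))^{−3/2} ds`;
equivalently, the pushforward under `𝚏_x` of the measure with density `(s(1−s))^{−3/2}`
on `[1/2, 1)` equals `x^{−1/2}` times that measure. -/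
theorem fBro_quasi_preservation :
    ∀ x > (0:ℝ), (∀ φ : ℝ → ℝ≥0∞, Measurable φ →
      (∫⁻ s in Ico ((1:ℝ)/2) 1,
          φ (fBro x s) * ENNReal.ofReal ((s * (1 - s)) ^ (-(3:ℝ)/2)))
        = ENNReal.ofReal (x ^ (-(1:ℝ)/2)) *
          ∫⁻ s in Ico ((1:ℝ)/2) 1,
            φ s * ENNReal.ofReal ((s * (1 - s)) ^ (-(3:ℝ)/2))) ∧
      Measure.map (fun s => fBro x s)
          ((volume.restrict (Ico ((1:ℝ)/2) 1)).withDensity fun s =>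
            ENNReal.ofReal ((s * (1 - s)) ^ (-(3:ℝ)/2)))
        = ENNReal.ofReal (x ^ (-(1:ℝ)/2)) •
          ((volume.restrict (Ico ((1:ℝ)/2) 1)).withDensity fun s =>
            ENNReal.ofReal ((s * (1 - s)) ^ (-(3:ℝ)/2))) := by
  intro x hx
  refine ⟨fun φ _ => main_lintegral hx φ, ?_⟩
  have hm : Measurable (fun s => fBro x s) := by
    unfold fBro hBro
    fun_prop
  have hd : Measurable fun s : ℝ => ENNReal.ofReal ((s * (1 - s)) ^ (-(3:ℝ)/2)) := by
    fun_prop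
  ext A hA
  have h := main_lintegral hx (A.indicator 1)
  rw [Measure.map_apply hm hA, Measure.smul_apply, withDensity_apply _ (hm hA),
    withDensity_apply _ hA, smul_eq_mul, ← lintegral_indicator (hm hA),
    ← lintegral_indicator hA]
  have e1 : ∀ s, ((fun s => fBro x s) ⁻¹' A).indicator
      (fun s : ℝ => ENNReal.ofReal ((s * (1 - s)) ^ (-(3:ℝ)/2))) s =
      A.indicator 1 (fBro x s) * ENNReal.ofReal ((s * (1 - s)) ^ (-(3:ℝ)/2)) := by
    intro s
    by_cases hs : fBro x s ∈ A
    · rw [indicator_of_mem (show s ∈ (fun s => fBro x s) ⁻¹' A from hs), indicator_of_mem hs,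
        Pi.one_apply, one_mul]
    · rw [indicator_of_notMem (show s ∉ (fun s => fBro x s) ⁻¹' A from hs),
        indicator_of_notMem hs, zero_mul]
  have e2 : ∀ s, A.indicator (fun s : ℝ => ENNReal.ofReal ((s * (1 - s)) ^ (-(3:ℝ)/2))) s =
      A.indicator 1 s * ENNReal.ofReal ((s * (1 - s)) ^ (-(3:ℝ)/2)) := by
    intro s
    by_cases hs : s ∈ A
    · rw [indicator_of_mem hs, indicator_of_mem hs, Pi.one_apply, one_mul]
    · rw [indicator_of_notMem hs, indicator_of_notMem hs, zero_mul]
  rw [lintegral_congr e1, lintegral_congr e2]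
  exact h
end

section
/- For every s ∈ [1/2, 1), the map u : x ↦ 𝚏_x(s) is differentiable on (0, ∞), satisfies u(1) = s, and solves x·u'(x) = u(x)·(1 − u(x))·(2·u(x) − 1) for all x > 0. (This is the restriction of the locally largest generator system ∂_x y_i(x) = x^{−1}·y_i(x)·(y_i(x) − Σ_j y_j(x)²) to binary conservative data y = (y₀, 1 − y₀, 0, 0, …).) -/
open Set

theorem fBro_hasDerivAt (s x : ℝ) (hs : 0 ≤ hBro s) (hx : 0 < x) :
    HasDerivAt (fun z => fBro z s)
      (fBro x s * (1 - fBro x s) * (2 * fBro x s - 1) / x) x := by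
  unfold fBro
  rcases hs.eq_or_lt with h0 | hpos
  · rw [← h0]
    simpa using hasDerivAt_const x ((1:ℝ) / 2)
  · generalize hBro s = h at *
    have hx0 : x ≠ 0 := hx.ne'
    have hd : 0 < 4 * x⁻¹ + h := by positivity
    have hw : 0 < h / (4 * x⁻¹ + h) := by positivity
    have h1 : HasDerivAt (fun z : ℝ => 4 * z⁻¹ + h) (4 * (-(x ^ 2)⁻¹)) x :=
      ((hasDerivAt_inv hx0).const_mul 4).add_const h
    have h2 := (((hasDerivAt_const x h).fun_div h1 hd.ne').sqrt hw.ne').const_add 1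
    have h3 := h2.const_mul (1 / 2 : ℝ)
    refine h3.congr_deriv ?_
    have hwd : (0 * (4 * x⁻¹ + h) - h * (4 * (-(x ^ 2)⁻¹))) / (4 * x⁻¹ + h) ^ 2
        = (h / (4 * x⁻¹ + h)) * (1 - h / (4 * x⁻¹ + h)) / x := by
      have : 4 + h * x ≠ 0 := by positivity
      have := hd.ne'
      field_simp
      ring
    rw [hwd]
    have hr := Real.sqrt_pos.mpr hw
    have hsq := Real.sq_sqrt hw.le
    generalize h / (4 * x⁻¹ + h) = w at *
    generalize Real.sqrt w = r at *
    subst hsq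
    field_simp
    ring

/-- **The Brownian locally largest family solves the generator ODE.**  For every
`s ∈ [1/2, 1)`, the map `u : x ↦ 𝚏_x(s)` is differentiable on `(0,∞)`, satisfies
`u(1) = s`, and solves `x·u'(x) = u(x)·(1 − u(x))·(2u(x) − 1)` for all `x > 0`. -/
theorem fBro_solves_generator_ode :
    ∀ s ∈ Ico ((1:ℝ)/2) 1,
      (∀ x > (0:ℝ), DifferentiableAt ℝ (fun z => fBro z s) x) ∧
      fBro 1 s = s ∧
      (∀ x > (0:ℝ), x * deriv (fun z => fBro z s) x
        = fBro x s * (1 - fBro x s) * (2 * fBro x s - 1)) := by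
  intro s hs
  obtain ⟨h1, h2⟩ := hs
  have hs0 : 0 < s := by linarith
  have hs1 : 0 < 1 - s := by linarith
  have hh : 0 ≤ hBro s := by unfold hBro; positivity
  refine ⟨fun x hx => (fBro_hasDerivAt s x hh hx).differentiableAt, ?_, fun x hx => ?_⟩
  · have key : hBro s / (4 * (1:ℝ)⁻¹ + hBro s) = (2 * s - 1) ^ 2 := by
      have e : 4 * (1:ℝ)⁻¹ + hBro s = 1 / (s * (1 - s)) := by
        unfold hBro
        field_simp
        ring
      rw [e]
      unfold hBro
      field_simp
      ring
    unfold fBro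
    rw [key, Real.sqrt_sq (by linarith)]
    ring
  · rw [(fBro_hasDerivAt s x hh hx).deriv]
    field_simp
end

section
/- Let k ≥ 1 be an integer and α ∈ (0, 1). For s = (s₀, …, s_{k−1}) ∈ ℝ^k with all s_j ≥ 0 and s₀ + ⋯ + s_{k−1} ≤ 1, write s_k := 1 − s₀ − ⋯ − s_{k−1}, and similarly for s' = (s'₀, …, s'_{k−2}) ∈ ℝ^{k−1} write s'_{k−1} := 1 − s'₀ − ⋯ − s'_{k−2}. Then for every measurable F : ℝ^{k+1} → [0, ∞], the following identity holds in [0, ∞]: Σ_{i=0}^{k} ∫_{{s : s_j ≥ 0, Σ_j s_j ≤ 1, s₀ ≥ s₁ ≥ ⋯ ≥ s_k}} (1 − s_i)^{−1} · (s₀·s₁⋯s_k)^{α−1} · F(s_i, s₀, …, s_{i−1}, s_{i+1}, …, s_k) ds₀ ⋯ ds_{k−1} = ∫₀¹ y^{α−1}·(1 − y)^{kα−2} · ( ∫_{{s' : s'_j ≥ 0, Σ_j s'_j ≤ 1, s'₀ ≥ ⋯ ≥ s'_{k−1}}} (s'₀⋯s'_{k−1})^{α−1} · F(y, (1 − y)·s'₀,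 …, (1 − y)·s'_{k−1}) ds'₀ ⋯ ds'_{k−2} ) dy. (For k = 1 the inner integral is just F(y, 1 − y).) -/
open MeasureTheory Set
open scoped ENNReal BigOperators

/-- Extend a point `s` of `ℝ^m` to the point `(s₀, …, s_{m−1}, 1 − s₀ − ⋯ − s_{m−1})`
of `ℝ^{m+1}`. -/
noncomputable def extendSimplex {m : ℕ} (s : Fin m → ℝ) : Fin (m + 1) → ℝ :=
  Fin.snoc s (1 - ∑ j, s j)

namespace HS

lemma ext_castSucc {m : ℕ} (s : Fin m → ℝ) (j : Fin m) :
    extendSimplex s j.castSucc = s j := by simp [extendSimplex]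

lemma ext_last {m : ℕ} (s : Fin m → ℝ) :
    extendSimplex s (Fin.last m) = 1 - ∑ j, s j := by simp [extendSimplex]

lemma ext_sum {m : ℕ} (s : Fin m → ℝ) : ∑ j, extendSimplex s j = 1 := by
  rw [Fin.sum_univ_castSucc]; simp [ext_castSucc, ext_last]

lemma ext_restrict {m : ℕ} (x : Fin (m + 1) → ℝ) (hx : ∑ j, x j = 1) :
    extendSimplex (fun j : Fin m => x j.castSucc) = x := by
  funext j
  refine Fin.lastCases ?_ (fun j => ?_) j
  · rw [ext_last, ← hx, Fin.sum_univ_castSucc]; ring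
  · rw [ext_castSucc]

lemma ext_cont {m : ℕ} : Continuous (extendSimplex (m := m)) := by
  refine continuous_pi fun j => ?_
  refine Fin.lastCases ?_ (fun j => ?_) j
  · simp only [ext_last]; fun_prop
  · simp only [ext_castSucc]; fun_prop

lemma ext_meas {m : ℕ} : Measurable (extendSimplex (m := m)) := ext_cont.measurable

/-- extension to sum-zero vectors -/
noncomputable def zext {m : ℕ} : (Fin m → ℝ) →ₗ[ℝ] (Fin (m + 1) → ℝ) where
  toFun s := Fin.snoc s (-∑ j, s j)
  map_add' s t := by
    funext j
    refine Fin.lastCases ?_ (fun j => ?_) j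
    · simp [Finset.sum_add_distrib]; ring
    · simp
  map_smul' c s := by
    funext j
    refine Fin.lastCases ?_ (fun j => ?_) j
    · simp [Finset.mul_sum]
    · simp

lemma zext_castSucc {m : ℕ} (s : Fin m → ℝ) (j : Fin m) :
    zext s j.castSucc = s j := by simp [zext]

lemma zext_last {m : ℕ} (s : Fin m → ℝ) :
    zext s (Fin.last m) = - ∑ j, s j := by simp [zext]

lemma zext_sum {m : ℕ} (s : Fin m → ℝ) : ∑ j, zext s j = 0 := by
  rw [Fin.sum_univ_castSucc]; simp [zext_castSucc, zext_last]

lemma zext_restrict {m : ℕ} (x : Fin (m + 1) → ℝ) (hx : ∑ j, x j = 0) :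
    zext (fun j : Fin m => x j.castSucc) = x := by
  funext j
  refine Fin.lastCases ?_ (fun j => ?_) j
  · rw [zext_last]
    rw [Fin.sum_univ_castSucc] at hx; linarith
  · rw [zext_castSucc]

lemma ext_eq_zext {m : ℕ} (s : Fin m → ℝ) :
    extendSimplex s = zext s + Pi.single (Fin.last m) 1 := by
  funext j
  refine Fin.lastCases ?_ (fun j => ?_) j
  · simp [ext_last, zext_last]; ring
  · simp [ext_castSucc, zext_castSucc]

/-- linear part of the permutation action -/
noncomputable def permL {m : ℕ} (σ : Equiv.Perm (Fin (m + 1))) :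
    (Fin m → ℝ) →ₗ[ℝ] (Fin m → ℝ) where
  toFun s := fun j => zext s (σ j.castSucc)
  map_add' s t := by funext j; simp
  map_smul' c s := by funext j; simp

lemma zext_permL {m : ℕ} (σ : Equiv.Perm (Fin (m + 1))) (s : Fin m → ℝ) :
    zext (permL σ s) = zext s ∘ σ := by
  apply zext_restrict (x := zext s ∘ σ)
  simp only [Function.comp]
  rw [Equiv.sum_comp σ (zext s), zext_sum]

lemma zext_permL_pow {m : ℕ} (σ : Equiv.Perm (Fin (m + 1))) (N : ℕ) (s : Fin m → ℝ) :
    zext ((permL σ ^ N) s) = zext s ∘ ⇑(σ ^ N) := by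
  induction N with
  | zero => simp
  | succ N ih =>
    rw [pow_succ', Module.End.mul_apply, zext_permL, ih, pow_succ]
    rfl

lemma permL_det {m : ℕ} (σ : Equiv.Perm (Fin (m + 1))) :
    |LinearMap.det (permL σ)| = 1 := by
  have h1 : permL σ ^ orderOf σ = 1 := by
    ext1 s
    ext x
    have := congrFun (zext_permL_pow σ (orderOf σ) (LinearMap.single ℝ (fun _ => ℝ) s 1)) x.castSucc
    rw [pow_orderOf_eq_one] at this
    simpa [zext_castSucc] using this
  have h2 := congrArg LinearMap.det h1
  rw [map_pow, map_one] at h2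
  have h3 : |LinearMap.det (permL σ)| ^ orderOf σ = 1 := by rw [← abs_pow, h2, abs_one]
  exact (pow_eq_one_iff_of_nonneg (abs_nonneg _) (orderOf_pos σ).ne').1 h3

lemma permL_mp {m : ℕ} (σ : Equiv.Perm (Fin (m + 1))) :
    MeasurePreserving (permL σ) volume volume := by
  refine ⟨(LinearMap.continuous_of_finiteDimensional _).measurable, ?_⟩
  have h := permL_det σ
  rw [Real.map_linearMap_volume_pi_eq_smul_volume_pi, abs_inv, h]
  · simp
  · intro h0; rw [h0] at h; simp at h

lemma lintegral_perm {m : ℕ} (σ : Equiv.Perm (Fin (m + 1)))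
    (G : (Fin (m + 1) → ℝ) → ℝ≥0∞) (hG : Measurable G) :
    ∫⁻ s : Fin m → ℝ, G (extendSimplex s ∘ σ) = ∫⁻ s : Fin m → ℝ, G (extendSimplex s) := by
  let c : Fin m → ℝ := fun j => (Pi.single (Fin.last m) 1 : Fin (m + 1) → ℝ) (σ j.castSucc)
  have key : ∀ s : Fin m → ℝ, extendSimplex s ∘ σ = extendSimplex (permL σ s + c) := by
    intro s
    have h := ext_restrict (extendSimplex s ∘ σ) (by
      simp only [Function.comp]
      rw [Equiv.sum_comp σ (extendSimplex s), ext_sum])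
    rw [← h]
    congr 1
    funext j
    simp [ext_eq_zext, permL, c]
  simp_rw [key]
  rw [(permL_mp σ).lintegral_comp (f := fun s => G (extendSimplex (s + c)))
    (hG.comp (ext_meas.comp (measurable_id.add_const c)))]
  exact lintegral_add_right_eq_self (fun s => G (extendSimplex s)) c

lemma ae_ne {m : ℕ} (a b : Fin (m + 1)) (hab : a ≠ b) :
    ∀ᵐ s : Fin m → ℝ, extendSimplex s a ≠ extendSimplex s b := by
  let A : AffineSubspace ℝ (Fin m → ℝ) :=
    { carrier := {s | extendSimplex s a = extendSimplex s b}
      smul_vsub_vadd_mem' := by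
        intro c p q r hp hq hr
        simp only [mem_ofPred_eq, ext_eq_zext, Pi.add_apply, vsub_eq_sub, vadd_eq_add, map_add,
          map_smul, map_sub, Pi.smul_apply, Pi.sub_apply, smul_eq_mul] at *
        linear_combination c * hp - c * hq + hr }
  have hA : A ≠ ⊤ := by
    intro h
    have h1 : (fun j : Fin m => (Pi.single a 1 : Fin (m + 1) → ℝ) j.castSucc) ∈ A := by
      rw [h]; trivial
    have h2 : extendSimplex (fun j : Fin m => (Pi.single a 1 : Fin (m + 1) → ℝ) j.castSucc) a =
      extendSimplex (fun j : Fin m => (Pi.single a 1 : Fin (m + 1) → ℝ) j.castSucc) b := h1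
    rw [ext_restrict _ (by simp)] at h2
    simp [hab.symm] at h2
  have := Measure.addHaar_affineSubspace volume A hA
  rw [ae_iff]
  simp only [ne_eq, not_not]
  exact this

lemma exists_unique_pos {n : ℕ} (z : Fin (n + 2) → ℝ) (hz : ∀ j : Fin (n + 1), z 0 ≠ z j.succ)
    (ht : Antitone (fun j : Fin (n + 1) => z j.succ)) :
    ∃! i : Fin (n + 2), Antitone (z ∘ Fin.cycleRange i) := by
  have char : ∀ i : Fin (n + 2), Antitone (z ∘ Fin.cycleRange i) →
      ∀ j : Fin (n + 1), j.castSucc < i ↔ z 0 < z j.succ := by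
    intro i hi j
    constructor
    · intro h
      have h1 : i.succAbove j ≤ i := by
        rw [Fin.succAbove_of_castSucc_lt _ _ h]; exact h.le
      have := hi h1
      simp only [Function.comp, Fin.cycleRange_succAbove, Fin.cycleRange_self] at this
      exact lt_of_le_of_ne this (hz j)
    · intro h
      by_contra h'
      have h1 : i ≤ i.succAbove j := by
        rw [Fin.succAbove_of_le_castSucc _ _ (not_lt.1 h')]
        exact (not_lt.1 h').trans (Fin.castSucc_lt_succ).le
      have := hi h1
      simp only [Function.comp, Fin.cycleRange_succAbove, Fin.cycleRange_self] at this
      linarith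
  have ex : ∃ i : Fin (n + 2), ∀ j : Fin (n + 1), j.castSucc < i ↔ z 0 < z j.succ := by
    let S : Set (Fin (n + 2)) := {i | ∀ j : Fin (n + 1), i ≤ j.castSucc → z j.succ ≤ z 0}
    have hS : S.Nonempty := ⟨Fin.last _, fun j hj => absurd hj (not_le.2 (Fin.castSucc_lt_last j))⟩
    obtain ⟨i, hi, hmin⟩ := WellFounded.has_min (wellFounded_lt (α := Fin (n + 2))) S hS
    refine ⟨i, fun j => ⟨fun h => ?_, fun h => ?_⟩⟩
    · by_contra h'
      refine hmin j.castSucc (fun j' hj' => ?_) h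
      exact (ht (Fin.castSucc_le_castSucc_iff.1 hj')).trans (not_lt.1 h')
    · by_contra h'
      exact absurd (hi j (not_lt.1 h')) (not_le.2 h)
  obtain ⟨i, hi⟩ := ex
  refine ⟨i, ?_, ?_⟩
  · intro a b hab
    rcases Fin.eq_self_or_eq_succAbove i a with rfl | ⟨a, rfl⟩
    · rcases Fin.eq_self_or_eq_succAbove a b with rfl | ⟨b, rfl⟩
      · rfl
      · simp only [Function.comp, Fin.cycleRange_succAbove, Fin.cycleRange_self]
        by_contra h'
        have h := (hi b).2 (not_le.1 h')
        rw [Fin.succAbove_of_castSucc_lt _ _ h] at hab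
        exact absurd h (not_lt.2 hab)
    · rcases Fin.eq_self_or_eq_succAbove i b with rfl | ⟨b, rfl⟩
      · simp only [Function.comp, Fin.cycleRange_succAbove, Fin.cycleRange_self]
        by_contra h'
        have h := mt (hi a).1 (not_lt.2 (not_le.1 h').le)
        rw [Fin.succAbove_of_le_castSucc _ _ (not_lt.1 h)] at hab
        exact absurd ((Fin.castSucc_lt_succ).trans_le hab) h
      · simp only [Function.comp, Fin.cycleRange_succAbove]
        exact ht ((Fin.strictMono_succAbove i).le_iff_le.1 hab)
  · intro i' hi'
    have h' := char i' hi'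
    rcases lt_trichotomy i' i with h | h | h
    · obtain ⟨j, rfl⟩ := Fin.exists_castSucc_eq.2 (h.trans_le (Fin.le_last _)).ne
      exact absurd ((h' j).2 ((hi j).1 h)) (lt_irrefl _)
    · exact h
    · obtain ⟨j, rfl⟩ := Fin.exists_castSucc_eq.2 (h.trans_le (Fin.le_last _)).ne
      exact absurd ((hi j).2 ((h' j).1 h)) (lt_irrefl _)

lemma tail_antitone {n : ℕ} (z : Fin (n + 2) → ℝ) (i : Fin (n + 2))
    (h : Antitone (z ∘ Fin.cycleRange i)) : Antitone (fun j : Fin (n + 1) => z j.succ) := by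
  intro a b hab
  have := h ((Fin.strictMono_succAbove i).monotone hab)
  simpa only [Function.comp, Fin.cycleRange_succAbove] using this

open Classical in
lemma sum_indicator {n : ℕ} (z : Fin (n + 2) → ℝ) (hz : ∀ j : Fin (n + 1), z 0 ≠ z j.succ)
    (P : Prop) (c : ℝ≥0∞) :
    ∑ i : Fin (n + 2), (if P ∧ Antitone (z ∘ Fin.cycleRange i) then c else 0) =
      if P ∧ Antitone (fun j : Fin (n + 1) => z j.succ) then c else 0 := by
  split_ifs with h
  · obtain ⟨i, hi, hu⟩ := exists_unique_pos z hz h.2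
    rw [Finset.sum_eq_single i]
    · rw [if_pos ⟨h.1, hi⟩]
    · intro b _ hb
      rw [if_neg fun h' => hb (hu b h'.2)]
    · simp
  · refine Finset.sum_eq_zero fun i _ => ?_
    rw [if_neg fun h' => h ⟨h'.1, tail_antitone z i h'.2⟩]

lemma lintegral_cons {n : ℕ} (G : (Fin (n + 1) → ℝ) → ℝ≥0∞) (hG : Measurable G) :
    ∫⁻ s, G s = ∫⁻ y : ℝ, ∫⁻ t : Fin n → ℝ, G (Fin.cons y t) := by
  have h := (volume_preserving_piFinSuccAbove (fun _ : Fin (n + 1) => ℝ) 0).symm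
  rw [← h.lintegral_comp hG, Measure.volume_eq_prod, lintegral_prod]
  · simp [MeasurableEquiv.piFinSuccAbove, Fin.insertNthEquiv]
  · exact (hG.comp (MeasurableEquiv.measurable _)).aemeasurable

lemma lintegral_scale {n : ℕ} (r : ℝ) (hr : 0 < r) (G : (Fin n → ℝ) → ℝ≥0∞) (hG : Measurable G) :
    ∫⁻ t, G t = ENNReal.ofReal (r ^ n) * ∫⁻ t, G (r • t) := by
  have h := Measure.map_addHaar_smul (volume : Measure (Fin n → ℝ)) hr.ne'
  have h2 : ∫⁻ t, G (r • t) = ∫⁻ t, G t ∂(Measure.map (r • ·) (volume : Measure (Fin n → ℝ))) := by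
    rw [lintegral_map hG (measurable_const_smul r)]
  rw [h2, h, lintegral_smul_measure, smul_eq_mul, ← mul_assoc, ← ENNReal.ofReal_mul (by positivity)]
  rw [abs_of_pos (by simp; positivity)]
  simp [hr.ne']

lemma ext_cons {n : ℕ} (y : ℝ) (t : Fin n → ℝ) :
    extendSimplex (Fin.cons y ((1 - y) • t)) =
      (Fin.cons y fun j => (1 - y) * extendSimplex t j : Fin (n + 2) → ℝ) := by
  funext j
  refine Fin.lastCases ?_ (fun j => ?_) j
  · rw [ext_last, ← Fin.succ_last, Fin.cons_succ, ext_last, Fin.sum_univ_succ]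
    simp [← Finset.mul_sum]; ring
  · rw [ext_castSucc]
    refine Fin.cases ?_ (fun j => ?_) j
    · simp
    · rw [← Fin.succ_castSucc, Fin.cons_succ, Fin.cons_succ, ext_castSucc]; simp

lemma measurableSet_antitone {m : ℕ} : MeasurableSet {z : Fin m → ℝ | Antitone z} := by
  have : {z : Fin m → ℝ | Antitone z} = ⋂ (a : Fin m) (b : Fin m) (_ : a ≤ b), {z | z b ≤ z a} := by
    ext z; simp [Antitone]
  rw [this]
  exact MeasurableSet.iInter fun a => MeasurableSet.iInter fun b => MeasurableSet.iInter fun _ =>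
    measurableSet_le (measurable_pi_apply b) (measurable_pi_apply a)

lemma measurableSet_nonneg {m : ℕ} : MeasurableSet {z : Fin m → ℝ | ∀ j, 0 ≤ z j} := by
  have : {z : Fin m → ℝ | ∀ j, 0 ≤ z j} = ⋂ a : Fin m, {z | 0 ≤ z a} := by
    ext z; simp
  rw [this]
  exact MeasurableSet.iInter fun a => measurableSet_le measurable_const (measurable_pi_apply a)

lemma measurableSet_region {m : ℕ} : MeasurableSet {s : Fin m → ℝ |
    (∀ j, 0 ≤ extendSimplex s j) ∧ Antitone (extendSimplex s)} :=
  ext_meas (measurableSet_nonneg.inter measurableSet_antitone)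

/-- the common integrand -/
noncomputable def W {n : ℕ} (α : ℝ) (F : (Fin (n + 2) → ℝ) → ℝ≥0∞) (z : Fin (n + 2) → ℝ) : ℝ≥0∞ :=
  ENNReal.ofReal ((1 - z 0)⁻¹ * (∏ j, z j) ^ (α - 1)) * F z

lemma W_meas {n : ℕ} (α : ℝ) (F : (Fin (n + 2) → ℝ) → ℝ≥0∞) (hF : Measurable F) :
    Measurable (W α F) := by
  unfold W
  refine Measurable.mul (Measurable.ennreal_ofReal ?_) hF
  refine Measurable.mul (Measurable.inv (by fun_prop)) (Measurable.pow_const ?_ _)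
  fun_prop

open Classical in
lemma left_side {n : ℕ} (α : ℝ) (F : (Fin (n + 2) → ℝ) → ℝ≥0∞) (hF : Measurable F) :
    (∑ i : Fin (n + 2),
      ∫⁻ s in {s : Fin (n + 1) → ℝ |
          (∀ j, 0 ≤ extendSimplex s j) ∧ Antitone (extendSimplex s)},
        ENNReal.ofReal ((1 - extendSimplex s i)⁻¹ * (∏ j, extendSimplex s j) ^ (α - 1)) *
          F (extendSimplex s ∘ ⇑(Fin.cycleRange i).symm)) =
    ∫⁻ s : Fin (n + 1) → ℝ, if (∀ j, 0 ≤ extendSimplex s j) ∧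
      Antitone (fun j : Fin (n + 1) => extendSimplex s j.succ) then W α F (extendSimplex s) else 0 := by
  let G : Fin (n + 2) → (Fin (n + 2) → ℝ) → ℝ≥0∞ := fun i z =>
    if (∀ j, 0 ≤ z j) ∧ Antitone (z ∘ Fin.cycleRange i) then W α F z else 0
  have hG : ∀ i, Measurable (G i) := by
    intro i
    refine Measurable.ite ?_ (W_meas α F hF) measurable_const
    refine measurableSet_nonneg.inter ?_
    have hm : Measurable (fun z : Fin (n + 2) → ℝ => z ∘ Fin.cycleRange i) := by
      refine measurable_pi_lambda _ fun j => measurable_pi_apply _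
    exact hm measurableSet_antitone
  have h1 : ∀ i : Fin (n + 2), (∫⁻ s in {s : Fin (n + 1) → ℝ |
          (∀ j, 0 ≤ extendSimplex s j) ∧ Antitone (extendSimplex s)},
        ENNReal.ofReal ((1 - extendSimplex s i)⁻¹ * (∏ j, extendSimplex s j) ^ (α - 1)) *
          F (extendSimplex s ∘ ⇑(Fin.cycleRange i).symm)) =
      ∫⁻ s : Fin (n + 1) → ℝ, G i (extendSimplex s) := by
    intro i
    rw [← lintegral_perm (Fin.cycleRange i).symm (G i) (hG i), ← lintegral_indicator
      measurableSet_region]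
    refine lintegral_congr fun s => ?_
    have e1 : (extendSimplex s ∘ ⇑(Fin.cycleRange i).symm) ∘ ⇑(Fin.cycleRange i) =
      extendSimplex s := by funext j; simp
    have e2 : (∀ j, 0 ≤ (extendSimplex s ∘ ⇑(Fin.cycleRange i).symm) j) ↔
        ∀ j, 0 ≤ extendSimplex s j :=
        ⟨fun h j => by simpa using h (Fin.cycleRange i j), fun h j => h _⟩
    have e3 : ∏ j, (extendSimplex s ∘ ⇑(Fin.cycleRange i).symm) j = ∏ j, extendSimplex s j :=
      Equiv.prod_comp (Fin.cycleRange i).symm (extendSimplex s)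
    simp only [G, W, e1, e2, e3, indicator_apply, mem_ofPred_eq]
    simp only [Function.comp_apply, Fin.cycleRange_symm_zero]
  simp_rw [h1]
  have hGe : ∀ i ∈ (Finset.univ : Finset (Fin (n + 2))),
      Measurable (fun s : Fin (n + 1) → ℝ => G i (extendSimplex s)) :=
    fun i _ => (hG i).comp ext_meas
  rw [← lintegral_finsetSum _ hGe]
  refine lintegral_congr_ae ?_
  have hne : ∀ᵐ s : Fin (n + 1) → ℝ, ∀ j : Fin (n + 1),
      extendSimplex s 0 ≠ extendSimplex s j.succ :=
    ae_all_iff.2 fun j => ae_ne _ _ (Fin.succ_ne_zero j).symm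
  filter_upwards [hne] with s hs
  have := sum_indicator (extendSimplex s) hs (∀ j, 0 ≤ extendSimplex s j) (W α F (extendSimplex s))
  simp only [G]
  convert this

lemma weight {n : ℕ} (α y : ℝ) (hy : y ∈ Ioo (0:ℝ) 1) (p : ℝ) (hp : 0 ≤ p) :
    (1 - y) ^ n * ((1 - y)⁻¹ * (y * ((1 - y) ^ (n + 1) * p)) ^ (α - 1)) =
      (y ^ (α - 1) * (1 - y) ^ (((n + 1 : ℕ) : ℝ) * α - 2)) * p ^ (α - 1) := by
  have h1 : 0 < 1 - y := by linarith [hy.2]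
  rw [Real.mul_rpow hy.1.le (by positivity), Real.mul_rpow (by positivity) hp,
    ← Real.rpow_natCast (1 - y) (n + 1), ← Real.rpow_mul h1.le, ← Real.rpow_natCast (1 - y) n,
    ← Real.rpow_neg_one (1 - y)]
  have : (1 - y) ^ (((n + 1 : ℕ) : ℝ) * α - 2) =
      (1 - y) ^ (n : ℝ) * (1 - y) ^ (-1 : ℝ) * (1 - y) ^ (((n + 1 : ℕ) : ℝ) * (α - 1)) := by
    rw [← Real.rpow_add h1, ← Real.rpow_add h1]
    congr 1; push_cast; ring
  rw [this]; ring

open Classical in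
lemma right_side {n : ℕ} (α : ℝ) (F : (Fin (n + 2) → ℝ) → ℝ≥0∞) (hF : Measurable F) :
    (∫⁻ s : Fin (n + 1) → ℝ, if (∀ j, 0 ≤ extendSimplex s j) ∧
      Antitone (fun j : Fin (n + 1) => extendSimplex s j.succ) then W α F (extendSimplex s) else 0) =
    ∫⁻ y in Ioo (0:ℝ) 1,
        ENNReal.ofReal (y ^ (α - 1) * (1 - y) ^ (((n + 1 : ℕ) : ℝ) * α - 2)) *
        ∫⁻ s' in {s' : Fin n → ℝ |
            (∀ j, 0 ≤ extendSimplex s' j) ∧ Antitone (extendSimplex s')},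
          ENNReal.ofReal ((∏ j, extendSimplex s' j) ^ (α - 1)) *
            F (Fin.cons y fun j => (1 - y) * extendSimplex s' j) := by
  have hK : Measurable (fun s : Fin (n + 1) → ℝ => if (∀ j, 0 ≤ extendSimplex s j) ∧
      Antitone (fun j : Fin (n + 1) => extendSimplex s j.succ)
      then W α F (extendSimplex s) else 0) := by
    refine Measurable.ite ?_ ((W_meas α F hF).comp ext_meas) measurable_const
    have hm : Measurable (fun s : Fin (n + 1) → ℝ => fun j : Fin (n + 1) =>
        extendSimplex s j.succ) :=
      measurable_pi_lambda _ fun j => (measurable_pi_apply _).comp ext_meas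
    exact (ext_meas measurableSet_nonneg).inter (hm measurableSet_antitone)
  rw [lintegral_cons _ hK, ← lintegral_indicator measurableSet_Ioo]
  refine lintegral_congr_ae ?_
  have h0 : ∀ᵐ y : ℝ, y ≠ 0 := by simp [ae_iff]
  have h1 : ∀ᵐ y : ℝ, y ≠ 1 := by simp [ae_iff]
  filter_upwards [h0, h1] with y hy0 hy1
  by_cases hy : y ∈ Ioo (0:ℝ) 1
  · rw [indicator_of_mem hy]
    have hr : 0 < 1 - y := by linarith [hy.2]
    have hc : Measurable (fun t : Fin n → ℝ => (Fin.cons y t : Fin (n + 1) → ℝ)) := by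
      refine measurable_pi_lambda _ fun j => ?_
      refine Fin.cases ?_ (fun j => ?_) j
      · simp
      · simpa using measurable_pi_apply j
    have hs : Measurable (fun t : Fin n → ℝ =>
        (Fin.cons y fun j => (1 - y) * extendSimplex t j : Fin (n + 2) → ℝ)) := by
      refine measurable_pi_lambda _ fun j => ?_
      refine Fin.cases ?_ (fun j => ?_) j
      · simp
      · simpa using ((measurable_pi_apply j).comp ext_meas).const_mul (1 - y)
    refine (lintegral_scale (1 - y) hr _ (hK.comp hc)).trans ?_
    rw [← lintegral_const_mul' _ _ ENNReal.ofReal_ne_top,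
      ← lintegral_const_mul' _ _ ENNReal.ofReal_ne_top, ← lintegral_indicator measurableSet_region]
    refine lintegral_congr fun t => ?_
    simp only [Function.comp_apply, ext_cons]
    have e1 : (∀ j, 0 ≤ (Fin.cons y fun j => (1 - y) * extendSimplex t j : Fin (n + 2) → ℝ) j) ↔
        ∀ j, 0 ≤ extendSimplex t j := by
      rw [Fin.forall_fin_succ]
      simp [hy.1.le, hr]
    have e2 : Antitone (fun j : Fin (n + 1) => (1 - y) * extendSimplex t j) ↔
        Antitone (extendSimplex t) := by
      constructor
      · intro h a b hab
        exact le_of_mul_le_mul_left (h hab) hr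
      · intro h a b hab
        exact mul_le_mul_of_nonneg_left (h hab) hr.le
    simp only [e1, Fin.cons_succ, e2, indicator_apply, mem_ofPred_eq]
    split_ifs with h
    · have hp : 0 ≤ ∏ j, extendSimplex t j := Finset.prod_nonneg fun j _ => h.1 j
      rw [W, ← mul_assoc, ← mul_assoc, ← ENNReal.ofReal_mul (by positivity),
        ← ENNReal.ofReal_mul (mul_nonneg (Real.rpow_nonneg hy.1.le _) (Real.rpow_nonneg hr.le _)),
        ← weight α y hy _ hp, Fin.prod_univ_succ]
      simp [Finset.prod_mul_distrib]
    · simp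
  · rw [indicator_of_notMem hy]
    refine lintegral_eq_zero_of_ae_eq_zero (Filter.Eventually.of_forall fun t => ?_)
    simp only [Pi.zero_apply]
    rw [if_neg]
    rintro ⟨hn, -⟩
    have e0 : extendSimplex (Fin.cons y t : Fin (n + 1) → ℝ) 0 = y := by
      rw [← Fin.castSucc_zero, ext_castSucc]; simp
    apply hy
    refine ⟨lt_of_le_of_ne (e0 ▸ hn 0) hy0.symm, lt_of_le_of_ne ?_ hy1⟩
    rw [← ext_sum (Fin.cons y t : Fin (n + 1) → ℝ)]
    conv_lhs => rw [← e0]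
    exact Finset.single_le_sum (fun j _ => hn j) (Finset.mem_univ 0)

end HS


/-- **Haas–Stephenson change-of-variables identity.**  Let `k = n + 1 ≥ 1` and
`α ∈ (0,1)`.  For every measurable `F : ℝ^{k+1} → [0,∞]`,
the sum over `i = 0, …, k` of the integrals over the ordered `(k+1)`-simplex of
`(1 − s_i)⁻¹·(s₀⋯s_k)^{α−1}·F(s_i, s₀, …, ŝ_i, …, s_k)` equals
`∫₀¹ y^{α−1}(1−y)^{kα−2} ∫_{ordered k-simplex} (s'₀⋯s'_{k−1})^{α−1}
  F(y, (1−y)s'₀, …, (1−y)s'_{k−1}) ds' dy`. -/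
theorem haas_stephenson_change_of_variables
    (k n : ℕ) (hk : 1 ≤ k) (hkn : k = n + 1)
    (α : ℝ) (hα : α ∈ Ioo (0:ℝ) 1)
    (F : (Fin (n + 2) → ℝ) → ℝ≥0∞) (hF : Measurable F) :
    (∑ i : Fin (n + 2),
      ∫⁻ s in {s : Fin (n + 1) → ℝ |
          (∀ j, 0 ≤ extendSimplex s j) ∧ Antitone (extendSimplex s)},
        ENNReal.ofReal ((1 - extendSimplex s i)⁻¹ * (∏ j, extendSimplex s j) ^ (α - 1)) *
          F (extendSimplex s ∘ ⇑(Fin.cycleRange i).symm))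
    = ∫⁻ y in Ioo (0:ℝ) 1,
        ENNReal.ofReal (y ^ (α - 1) * (1 - y) ^ ((k : ℝ) * α - 2)) *
        ∫⁻ s' in {s' : Fin n → ℝ |
            (∀ j, 0 ≤ extendSimplex s' j) ∧ Antitone (extendSimplex s')},
          ENNReal.ofReal ((∏ j, extendSimplex s' j) ^ (α - 1)) *
            F (Fin.cons y fun j => (1 - y) * extendSimplex s' j) := by
  subst hkn
  rw [HS.left_side α F hF, HS.right_side α F hF]
end

section
/- Define w(s) := (s·(1 − s))^{5/2} · ∫_{1/2}^s (t·(1 − t))^{−5/2} dt for s ∈ (1/2, 1). Then: (i) w(s) = (2/3)·s·(1 − s)·(2s − 1)·(1 + 8s − 8s²) for all s ∈ (1/2, 1); (ii) the supremum M := sup_{s ∈ (1/2, 1)} w(s)/(1 − s) = sup_{s ∈ (1/2, 1)} (2/3)·s·(2s − 1)·(1 + 8s − 8s²) is finite, and α_c := 1/M is the unique root in the interval (1, 3/2) of the cubic equation 256 − 162·x − 42·x² + x³ = 0; in particular 1/2 < α_c < 3/2, so that the inequality α·w(s) ≤ 1 − s holds for all s ∈ (1/2, 1) when α = 1/2 but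 fails for some s ∈ (1/2, 1) when α = 3/2. -/
open MeasureTheory Set intervalIntegral

/-- `w(s) = (s(1−s))^{5/2} · ∫_{1/2}^s (t(1−t))^{−5/2} dt`, the function controlling the
monotonicity criterion for the Brownian growth-fragmentation splitting measure
(density `(s(1−s))^{−5/2}` on `(1/2, 1)`). -/
noncomputable def wBro (s : ℝ) : ℝ :=
  (s * (1 - s)) ^ ((5:ℝ)/2) * ∫ t in (1/2:ℝ)..s, (t * (1 - t)) ^ (-(5:ℝ)/2)

lemma wBro_eq (s : ℝ) (hs : s ∈ Ioo ((1:ℝ)/2) 1) :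
    wBro s = (2/3) * s * (1 - s) * (2*s - 1) * (1 + 8*s - 8*s^2) := by
  obtain ⟨h1, h2⟩ := hs
  have hpos : ∀ t ∈ uIcc ((1:ℝ)/2) s, 0 < t * (1 - t) := by
    intro t ht
    rw [uIcc_of_le h1.le] at ht
    exact mul_pos (by linarith [ht.1]) (by linarith [ht.2])
  have hint : ∫ t in (1/2:ℝ)..s, (t * (1 - t)) ^ (-(5:ℝ)/2)
      = (2/3) * (2*s - 1) * (1 + 8*s - 8*s^2) * (s * (1 - s)) ^ (-(3:ℝ)/2)
        - (2/3) * (2*(1/2:ℝ) - 1) * (1 + 8*(1/2:ℝ) - 8*(1/2:ℝ)^2)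
          * ((1/2:ℝ) * (1 - 1/2)) ^ (-(3:ℝ)/2) := by
    refine integral_eq_sub_of_hasDerivAt
      (f := fun t : ℝ => (2/3) * (2*t - 1) * (1 + 8*t - 8*t^2) * (t * (1 - t)) ^ (-(3:ℝ)/2)) ?_ ?_
    · intro t ht
      have hp := hpos t ht
      have hd : HasDerivAt (fun t : ℝ => t * (1 - t)) (1 * (1 - t) + t * (0 - 1)) t :=
        (hasDerivAt_id t).mul ((hasDerivAt_const t (1:ℝ)).sub (hasDerivAt_id t))
      have hr := hd.rpow_const (p := -(3:ℝ)/2) (Or.inl hp.ne')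
      have hN : HasDerivAt (fun t : ℝ => (2/3) * (2*t - 1) * (1 + 8*t - 8*t^2))
          ((2/3) * (2*1) * (1 + 8*t - 8*t^2) + (2/3) * (2*t - 1) * (8*1 - 8*(2*t))) t := by
        have ha : HasDerivAt (fun t : ℝ => (2/3) * (2*t - 1)) ((2/3) * (2*1)) t :=
          (((hasDerivAt_id t).const_mul 2).sub_const 1).const_mul (2/3)
        have hb : HasDerivAt (fun t : ℝ => 1 + 8*t - 8*t^2) (8*1 - 8*(2*t)) t := by
          have := (((hasDerivAt_id t).const_mul 8).const_add 1).sub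
            ((hasDerivAt_pow 2 t).const_mul 8)
          refine HasDerivAt.congr_deriv (f := fun t : ℝ => 1 + 8*t - 8*t^2) this ?_
          norm_num
        exact ha.mul hb
      have h := hN.mul hr
      refine h.congr_deriv ?_
      have e1 : (t * (1 - t)) ^ (-(3:ℝ)/2) = (t * (1 - t)) ^ (-(5:ℝ)/2) * (t * (1 - t)) := by
        rw [← Real.rpow_add_one hp.ne']; norm_num
      have e2 : (-(3:ℝ)/2 - 1) = -(5:ℝ)/2 := by norm_num
      rw [e2, e1]
      ring
    · apply ContinuousOn.intervalIntegrable
      refine ContinuousOn.rpow_const (by fun_prop) ?_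
      intro t ht
      exact Or.inl (hpos t ht).ne'
  have hp := hpos s right_mem_uIcc
  have e : (s * (1 - s)) ^ ((5:ℝ)/2) * (s * (1 - s)) ^ (-(3:ℝ)/2) = s * (1 - s) := by
    rw [← Real.rpow_add hp]; norm_num
  unfold wBro
  rw [hint]
  linear_combination ((2/3) * (2*s - 1) * (1 + 8*s - 8*s^2)) * e

/-- **Critical self-similarity parameter of the Brownian growth-fragmentation tree.**
(i) `w(s) = (2/3)·s(1−s)(2s−1)(1+8s−8s²)` on `(1/2, 1)`;
(ii) `M = sup_{(1/2,1)} w(s)/(1−s) = sup_{(1/2,1)} (2/3)s(2s−1)(1+8s−8s²)` is finite, and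
`α_c = 1/M` is the unique root in `(1, 3/2)` of `256 − 162x − 42x² + x³ = 0`; in
particular `1/2 < α_c < 3/2`, so `α·w(s) ≤ 1 − s` holds on `(1/2,1)` for `α = 1/2` but
fails for `α = 3/2`. -/
theorem brownian_growth_fragmentation_critical_alpha :
    (∀ s ∈ Ioo ((1:ℝ)/2) 1,
      wBro s = (2/3) * s * (1 - s) * (2*s - 1) * (1 + 8*s - 8*s^2)) ∧
    BddAbove ((fun s => wBro s / (1 - s)) '' Ioo ((1:ℝ)/2) 1) ∧
    (sSup ((fun s => wBro s / (1 - s)) '' Ioo ((1:ℝ)/2) 1)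
      = sSup ((fun s => (2/3) * s * (2*s - 1) * (1 + 8*s - 8*s^2)) '' Ioo ((1:ℝ)/2) 1)) ∧
    (let M := sSup ((fun s => wBro s / (1 - s)) '' Ioo ((1:ℝ)/2) 1)
     let αc := 1 / M
     αc ∈ Ioo (1:ℝ) (3/2) ∧
     256 - 162*αc - 42*αc^2 + αc^3 = 0 ∧
     (∀ x ∈ Ioo (1:ℝ) (3/2), 256 - 162*x - 42*x^2 + x^3 = 0 → x = αc) ∧
     ((1:ℝ)/2 < αc ∧ αc < 3/2) ∧
     (∀ s ∈ Ioo ((1:ℝ)/2) 1, (1/2) * wBro s ≤ 1 - s) ∧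
     (∃ s ∈ Ioo ((1:ℝ)/2) 1, ¬ ((3/2) * wBro s ≤ 1 - s))) := by
  obtain ⟨c, ⟨hc1, hc2⟩, hc⟩ : ∃ c ∈ Icc (0.89:ℝ) 0.91, -64*c^3 + 72*c^2 - 12*c - 1 = 0 := by
    have hcont : ContinuousOn (fun c : ℝ => -64*c^3 + 72*c^2 - 12*c - 1) (Icc (0.89:ℝ) 0.91) := by
      fun_prop
    have := intermediate_value_Icc' (by norm_num) hcont
    exact this (show (0:ℝ) ∈ _ by constructor <;> norm_num)
  set g : ℝ → ℝ := fun s => (2/3) * s * (2*s - 1) * (1 + 8*s - 8*s^2) with hg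
  have himg : (fun s => wBro s / (1 - s)) '' Ioo ((1:ℝ)/2) 1 = g '' Ioo ((1:ℝ)/2) 1 := by
    apply image_congr
    intro s hs
    have : 1 - s ≠ 0 := by linarith [hs.2]
    simp only [hg]
    rw [wBro_eq s hs]
    field_simp
  have hmax : ∀ s ∈ Ioo ((1:ℝ)/2) 1, g s ≤ g c := by
    intro s hs
    have hq : 0 ≤ 16*s^2 + (32*c-24)*s + (48*c^2-48*c+6) := by
      nlinarith [hs.1, hs.2, mul_nonneg (sub_nonneg.2 hs.1.le) (sub_nonneg.2 hc1),
        mul_nonneg (sub_nonneg.2 hc1) (sub_nonneg.2 hc1)]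
    have hE : g c - g s = (2/3) * ((s-c)^2 * (16*s^2 + (32*c-24)*s + (48*c^2-48*c+6))) := by
      simp only [hg]
      linear_combination (-(2/3)*(s-c)) * hc
    have := mul_nonneg (sq_nonneg (s-c)) hq
    linarith
  have hcm : c ∈ Ioo ((1:ℝ)/2) 1 := ⟨by linarith, by linarith⟩
  have hgr : IsGreatest (g '' Ioo ((1:ℝ)/2) 1) (g c) :=
    ⟨mem_image_of_mem g hcm, by rintro _ ⟨s, hs, rfl⟩; exact hmax s hs⟩
  have hM : sSup (g '' Ioo ((1:ℝ)/2) 1) = g c := hgr.csSup_eq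
  have hlow : 0.82 < g c := by
    have := hmax 0.9 (by constructor <;> norm_num)
    have h2 : (0.82:ℝ) < g 0.9 := by simp only [hg]; norm_num
    linarith
  have hup : g c < 1 := by
    have e : g c = (2/3) * (c * (2*c-1)) * (1 + 8*c*(1-c)) := by simp only [hg]; ring
    have a1 : c * (2*c-1) ≤ 0.7462 := by nlinarith
    have a2 : 1 + 8*c*(1-c) ≤ 1.7832 := by nlinarith
    have a3 : 0 ≤ 1 + 8*c*(1-c) := by nlinarith
    have := mul_le_mul a1 a2 a3 (by norm_num)
    rw [e]; nlinarith
  have hpoly : 256 * (g c)^3 - 162 * (g c)^2 - 42 * g c + 1 = 0 := by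
    simp only [hg]
    linear_combination ((131072/27)*c^9 + (-16384)*c^8 + (169984/9)*c^7 + (-205568/27)*c^6 + (128/3)*c^5 + (-224/9)*c^4 + (6368/27)*c^3 + (24)*c^2 + (-16)*c^1 + (-1)*c^0) * hc
  have hgpos : 0 < g c := by linarith
  rw [himg]
  refine ⟨wBro_eq, hgr.bddAbove, rfl, ?_⟩
  rw [hM]
  generalize hm : g c = m at *
  intro M αc
  have hα1 : 1 < αc := by
    change 1 < 1 / m
    rw [lt_div_iff₀ hgpos]; linarith
  have hα2 : αc < 3/2 := by
    change 1 / m < 3/2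
    rw [div_lt_iff₀ hgpos]; linarith
  have hroot : 256 - 162*αc - 42*αc^2 + αc^3 = 0 := by
    have hαm : αc * m = 1 := one_div_mul_cancel hgpos.ne'
    have h3 : αc^3 * (256 * m^3 - 162 * m^2 - 42 * m + 1) = 0 := by rw [hpoly, mul_zero]
    have e : αc^3 * (256 * m^3 - 162 * m^2 - 42 * m + 1)
      = 256 * (αc * m)^3 - 162 * αc * (αc * m)^2 - 42 * αc^2 * (αc * m) + αc^3 := by ring
    rw [e, hαm] at h3
    linarith
  refine ⟨⟨hα1, hα2⟩, hroot, ?_, ⟨by linarith, hα2⟩, ?_, ?_⟩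
  · intro x hx hx0
    have hf : (x - αc) * (162 + 42*(x + αc) - (x^2 + x*αc + αc^2)) = 0 := by
      linear_combination hroot - hx0
    rcases mul_eq_zero.1 hf with h | h
    · linarith
    · exfalso
      nlinarith [hx.1, hx.2]
  · intro s hs
    have h := hmax s hs
    have e : wBro s = (1 - s) * g s := by rw [wBro_eq s hs]; simp only [hg]; ring
    rw [e]
    nlinarith [hs.2]
  · refine ⟨0.9, by constructor <;> norm_num, ?_⟩
    rw [wBro_eq 0.9 (by constructor <;> norm_num)]
    norm_num
end

section
/- (i) For every s ∈ (0, 1): ∫_{1/2}^s (t·(1 − t))^{−2} dt = (2s − 1)/(s·(1 − s)) + 2·log(s/(1 − s)). (ii) There exists s ∈ (1/2, 1) such that (s·(1 − s))²·( (2s − 1)/(s·(1 − s)) + 2·log(s/(1 − s)) ) > 1 − s; equivalently, s·(2s − 1) + 2·s²·(1 − s)·log(s/(1 − s)) > 1 for some s ∈ (1/2, 1). Consequently the monotonicity criterion α·I(s) ≤ (1 − s)·λ(s) fails for α = 1, λ(s) = (s(1 − s))^{−2}, I(s) = ∫_{1/2}^s λ(t) dt. -/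
open MeasureTheory Set intervalIntegral

/-- **The Aidekon–Da Silva tree is not growing.**
(i) For `s ∈ (0,1)`: `∫_{1/2}^s (t(1−t))^{−2} dt = (2s−1)/(s(1−s)) + 2·log(s/(1−s))`.
(ii) There is `s ∈ (1/2,1)` with
`(s(1−s))²·((2s−1)/(s(1−s)) + 2 log(s/(1−s))) > 1 − s`, equivalently
`s(2s−1) + 2s²(1−s)·log(s/(1−s)) > 1`.  Consequently the monotonicity criterion
`α·I(s) ≤ (1−s)·λ(s)` fails for `α = 1`, `λ(s) = (s(1−s))^{−2}`,
`I(s) = ∫_{1/2}^s λ(t) dt`. -/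
theorem aidekon_da_silva_not_growing :
    (∀ s ∈ Ioo (0:ℝ) 1,
      (∫ t in (1/2:ℝ)..s, ((t * (1 - t)) ^ 2)⁻¹)
        = (2*s - 1) / (s * (1 - s)) + 2 * Real.log (s / (1 - s))) ∧
    (∃ s ∈ Ioo ((1:ℝ)/2) 1,
      (s * (1 - s)) ^ 2 * ((2*s - 1) / (s * (1 - s)) + 2 * Real.log (s / (1 - s))) > 1 - s ∧
      s * (2*s - 1) + 2 * s^2 * (1 - s) * Real.log (s / (1 - s)) > 1) ∧
    (∃ s ∈ Ioo ((1:ℝ)/2) 1,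
      ¬ ((1:ℝ) * (∫ t in (1/2:ℝ)..s, ((t * (1 - t)) ^ 2)⁻¹)
          ≤ (1 - s) * ((s * (1 - s)) ^ 2)⁻¹)) := by
  have h1 : ∀ s ∈ Ioo (0:ℝ) 1,
      (∫ t in (1/2:ℝ)..s, ((t * (1 - t)) ^ 2)⁻¹)
        = (2*s - 1) / (s * (1 - s)) + 2 * Real.log (s / (1 - s)) := by
    intro s hs
    have hsub : ∀ t ∈ uIcc (1/2:ℝ) s, 0 < t ∧ 0 < 1 - t := by
      intro t ht
      have : t ∈ Ioo (0:ℝ) 1 :=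
        (ordConnected_Ioo.uIcc_subset (by norm_num) hs) ht
      exact ⟨this.1, by linarith [this.2]⟩
    have hd : ∀ t ∈ uIcc (1/2:ℝ) s, HasDerivAt
        (fun t : ℝ => (2*t - 1) / (t * (1 - t)) + 2 * Real.log (t / (1 - t)))
        (((t * (1 - t)) ^ 2)⁻¹) t := by
      intro t ht
      obtain ⟨a, b⟩ := hsub t ht
      have e1 : HasDerivAt (fun t : ℝ => 2*t - 1) (2*1) t :=
        ((hasDerivAt_id t).const_mul 2).sub_const 1
      have e2 : HasDerivAt (fun t : ℝ => 1 - t) (-1) t := (hasDerivAt_id t).const_sub 1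
      have e3 : HasDerivAt (fun t : ℝ => t * (1 - t)) (1 * (1 - t) + t * (-1)) t :=
        (hasDerivAt_id t).mul e2
      have e4 : HasDerivAt (fun t : ℝ => t / (1 - t))
          ((1 * (1 - t) - t * (-1)) / (1 - t)^2) t :=
        (hasDerivAt_id t).div e2 b.ne'
      have e5 := (e1.div e3 (mul_pos a b).ne').add
        ((e4.log (div_pos a b).ne').const_mul 2)
      refine e5.congr_deriv ?_
      have := a.ne'
      have := b.ne'
      field_simp
      ring
    rw [integral_eq_sub_of_hasDerivAt hd]
    · norm_num
    · apply ContinuousOn.intervalIntegrable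
      apply ContinuousOn.inv₀ (by fun_prop)
      intro t ht
      obtain ⟨a, b⟩ := hsub t ht
      positivity
  have hl : Real.log ((8/9:ℝ) / (1 - 8/9)) = 3 * Real.log 2 := by
    rw [show ((8/9:ℝ) / (1 - 8/9)) = 2^3 by norm_num, Real.log_pow]
    norm_num
  have h2 := Real.log_two_gt_d9
  refine ⟨h1, ⟨8/9, by norm_num, ?_, ?_⟩, ⟨8/9, by norm_num, ?_⟩⟩
  · rw [hl]; norm_num; linarith
  · rw [hl]; norm_num; linarith
  · rw [h1 _ (by norm_num), hl]; norm_num; linarith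
end
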